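/- Let (a_n)_{n≥1} be a strictly increasing sequence of positive integers such that there exist constants γ > 0 and C > 0 with a_n ≤ C·e^{γ(log n)²} for all n ≥ 1, and which is convex, i.e. a_{n+1} − a_n > a_n − a_{n−1} for all n ≥ 2. Then for Lebesgue-almost all real α, for every ε > 0 there are infinitely many N with N·D_N*({a_1 α}, …, {a_N α}) ≥ N^{7/26 − ε}. -/

import Mathlib

open Filter MeasureTheory

/-- Star-discrepancy of the first `N` points `x 1, ..., x N` of a sequence in `[0,1)`. -/
noncomputable def starDisc (N : ℕ) (x : ℕ → ℝ) : ℝ :=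
  ⨆ β : Set.Ioc (0:ℝ) 1,
    |(((Finset.Icc 1 N).filter fun n => 0 ≤ x n ∧ x n < (β : ℝ)).card : ℝ) / N - (β : ℝ)|

/-!
A convex set `A` of `N` integers is of Szemerédi–Trotter type: it has only `O(N |B|² / t³)`
differences with `B` that are represented `t` times. Counting triangles in the graph of its popular
differences turns this into the bound `N ^ (32 / 13)`, up to logarithms, for the additive energy of
`A`, which is the fourth moment of the exponential sum `S(α) = ∑ n ∈ A, exp (2 π i n α)`. Since the
second moment of `S` is `N`, Hölder's inequality and dyadic pigeonholing give a level `l = 2 ^ j` at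
which `l |{|S| ≥ l}|` is at least `N ^ ((3 - 32 / 13) / 2) = N ^ (7 / 26)`, up to logarithms.

Now let `N = 2 ^ m`, and let `H` be slightly larger than `1 / |{|S| ≥ l}|`. Approximate the
indicator of `{|S| ≥ l}` by a trigonometric polynomial `f`. For distinct primes `p ≤ H` the
functions `f(p α)` are almost uncorrelated, so by a variance estimate, outside a set of `α` of
measure `O(N ^ (-δ))`, some `p ≤ H` has `|S(p α)|` nearly `l`. Koksma's inequality bounds `|S(p α)|`
by `2 π p N D`, with `D` the star-discrepancy, so that `N D` is at least nearly `l / H`, hence at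
least nearly `N ^ (7 / 26)`. The exceptional measures are summable over `m`, and the Borel–Cantelli
lemma applies.
-/

open scoped Pointwise ComplexConjugate Combinatorics.Additive FourierTransform Finset

/-- `ρ[A,B] d` is the number of representations of `d` as a difference `a - b` with `a ∈ A` and
`b ∈ B`. -/
local notation "ρ[" A "," B "]" => Finset.addConvolution A (-B)

/-- The real-valued indicator function of a finite set. -/
local notation "𝟙[" D "]" => Set.indicator (SetLike.coe D) fun _ => (1 : ℝ)

/-! ### Additive energy of convex sets -/

section Differences

variable {G : Type*} [AddCommGroup G] [DecidableEq G]

lemma diffConvolution_eq_card (A B : Finset G) (d : G) : ρ[A,B] d = #{b ∈ B | b + d ∈ A} := by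
  rw [← Finset.card_sub_eq]
  refine Finset.card_nbij' Prod.snd (fun b => (b + d, b)) ?_ ?_ ?_ ?_
  · rintro ⟨a, b⟩ hab
    obtain ⟨⟨ha, hb⟩, rfl⟩ := by simpa using hab
    simpa [hb] using ha
  · intro b hb
    simpa [and_comm] using hb
  · rintro ⟨a, b⟩ hab
    obtain ⟨-, rfl⟩ := by simpa using hab
    simp
  · exact fun _ _ => rfl

lemma diffConvolution_self_neg (A : Finset G) (d : G) : ρ[A,A] (-d) = ρ[A,A] d := by
  rw [Finset.addConvolution_neg, neg_neg]

lemma diffConvolution_pos_iff {A B : Finset G} {d : G} : 0 < ρ[A,B] d ↔ d ∈ A - B := by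
  rw [Finset.addConvolution_pos, sub_eq_add_neg]

lemma sum_sum_sub_eq_sum_diffConvolution_mul {R : Type*} [Semiring R] (A B : Finset G)
    {U : Finset G} (hU : A - B ⊆ U) (F : G → R) :
    ∑ b ∈ B, ∑ a ∈ A, F (a - b) = ∑ d ∈ U, (ρ[A,B] d : R) * F d := by
  have hmaps : ∀ ab ∈ A ×ˢ B, ab.1 - ab.2 ∈ U := fun ab hab =>
    hU (Finset.sub_mem_sub (Finset.mem_product.1 hab).1 (Finset.mem_product.1 hab).2)
  rw [Finset.sum_comm, ← Finset.sum_product', ← Finset.sum_fiberwise_of_maps_to' hmaps]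
  refine Finset.sum_congr rfl fun d _ => ?_
  rw [Finset.sum_const, nsmul_eq_mul, Finset.card_sub_eq]

lemma sum_diffConvolution_le (A B U : Finset G) : ∑ d ∈ U, ρ[A,B] d ≤ #A * #B := by
  calc ∑ d ∈ U, ρ[A,B] d ≤ ∑ d ∈ U ∪ (A - B), ρ[A,B] d :=
        Finset.sum_le_sum_of_subset Finset.subset_union_left
    _ = #A * #B := by
        simpa [mul_comm] using (sum_sum_sub_eq_sum_diffConvolution_mul A B
          Finset.subset_union_right (fun _ => (1 : ℕ))).symm

lemma sum_sum_diffConvolution_sub_eq (A B C : Finset G) :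
    ∑ b ∈ B, ∑ c ∈ C, (ρ[A,A] (c - b) : ℝ) =
      ∑ d ∈ A - B, (ρ[A,B] d : ℝ) * ρ[A,C] d := by
  rw [← sum_sum_sub_eq_sum_diffConvolution_mul A B subset_rfl fun d => (ρ[A,C] d : ℝ)]
  refine Finset.sum_congr rfl fun b _ => ?_
  simp only [diffConvolution_eq_card, Finset.card_filter, Nat.cast_sum]
  rw [Finset.sum_comm]
  refine Finset.sum_congr rfl fun x _ => Finset.sum_congr rfl fun c _ => ?_
  rw [add_sub_left_comm]

lemma addEnergy_eq_sum_diffConvolution_sq (A : Finset G) :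
    E[A] = ∑ d ∈ A - A, ρ[A,A] d ^ 2 := by
  have hmaps : ∀ x ∈ {x ∈ (A ×ˢ A) ×ˢ A ×ˢ A | x.1.1 + x.2.1 = x.1.2 + x.2.2},
      x.1.1 - x.1.2 ∈ A - A := fun x hx => by
    simp only [Finset.mem_filter, Finset.mem_product] at hx
    exact Finset.sub_mem_sub hx.1.1.1 hx.1.1.2
  rw [Finset.addEnergy, Finset.card_eq_sum_card_fiberwise hmaps]
  refine Finset.sum_congr rfl fun d _ => ?_
  rw [sq]
  nth_rw 2 [← diffConvolution_self_neg]
  rw [← Finset.card_sub_eq, ← Finset.card_sub_eq, ← Finset.card_product]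
  congr 1
  ext ⟨⟨a, b⟩, a', b'⟩
  simp only [Finset.mem_filter, Finset.mem_product]
  constructor
  · rintro ⟨⟨hmem, hsum⟩, rfl⟩
    refine ⟨⟨hmem.1, rfl⟩, hmem.2, ?_⟩
    rw [neg_sub, sub_eq_sub_iff_add_eq_add, add_comm, hsum, add_comm]
  · rintro ⟨⟨hab, rfl⟩, hab', hd⟩
    rw [neg_sub, sub_eq_sub_iff_add_eq_add] at hd
    exact ⟨⟨⟨hab, hab'⟩, by rw [add_comm, hd, add_comm]⟩, rfl⟩

/-- `A` has at most `K * #A * #B ^ 2 / t ^ 3` differences that are represented at least `t` times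
in `A - B`, for every `B` and `t`. This is the bound that the Szemerédi–Trotter theorem gives for
convex sets. -/
def IsSzemerediTrotterSet (K : ℕ) (A : Finset G) : Prop :=
  ∀ (B : Finset G) (t : ℕ), t ^ 3 * #{d ∈ A - B | t ≤ ρ[A,B] d} ≤ K * (#A * #B ^ 2)

end Differences

section Convex

lemma card_sub_le_card_filter_exists_lt {ι κ : Type*} [LinearOrder κ] (S : Finset ι) {r : ι → κ}
    (hr : Set.InjOn r S) {φ : ι → ℕ} {K : ℕ} (hφ : ∀ s ∈ S, φ s < K) :
    #S - K ≤ #{s ∈ S | ∃ s' ∈ S, r s' < r s ∧ φ s' = φ s} := by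
  have hinj : #{s ∈ S | ¬ ∃ s' ∈ S, r s' < r s ∧ φ s' = φ s} ≤ #(Finset.range K) := by
    refine Finset.card_le_card_of_injOn φ (fun s hs => ?_) fun b hb c hc hbc => ?_
    · simpa using hφ s (Finset.mem_filter.1 hs).1
    · obtain ⟨hb, hb'⟩ := Finset.mem_filter.1 hb
      obtain ⟨hc, hc'⟩ := Finset.mem_filter.1 hc
      push Not at hb' hc'
      exact hr hb hc (le_antisymm (not_lt.1 fun h => hb' c hc h hbc.symm)
        (not_lt.1 fun h => hc' b hb h hbc))
  have hsplit := Finset.card_filter_add_card_filter_not (s := S)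
    (fun s => ∃ s' ∈ S, r s' < r s ∧ φ s' = φ s)
  rw [Finset.card_range] at hinj
  omega

lemma sub_lt_of_div_eq_div {a b p : ℕ} (hp : 0 < p) (h : a / p = b / p) : b - a < p := by
  have ha := Nat.div_mul_le_self a p
  have hb := Nat.lt_div_mul_add (a := b) hp
  rw [h] at ha
  omega

variable {G : Type*} [AddCommGroup G] [LinearOrder G] [IsOrderedAddMonoid G]

lemma strictMono_add_sub_of_convex {f : ℕ → G} (hconv : StrictMono fun i => f (i + 1) - f i)
    {u : ℕ} (hu : 0 < u) : StrictMono fun i => f (i + u) - f i := by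
  have htel : ∀ i, f (i + u) - f i = ∑ k ∈ Finset.range u, (f (i + k + 1) - f (i + k)) := fun i =>
    (Finset.sum_range_sub (fun k => f (i + k)) u).symm
  intro i j hij
  simp only [htel]
  exact Finset.sum_lt_sum_of_nonempty (Finset.nonempty_range_iff.2 hu.ne') fun k _ =>
    hconv (Nat.add_lt_add_right hij k)

open scoped Classical in
/-- The pairs `x = (i, j)` with `i < N` at which the difference `f i - g j` repeats its value at
some pair `y` preceding `x` in both coordinates, by less than `p` in the first one and by less than
`q` in the second one. -/
noncomputable def closeCoincidences {M : ℕ} (f : ℕ → G) (g : Fin M → G) (N p q : ℕ) :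
    Finset (ℕ × Fin M) :=
  {x ∈ Finset.range N ×ˢ Finset.univ | ∃ y : ℕ × Fin M, y.1 < x.1 ∧ y.2 < x.2 ∧
    x.1 - y.1 < p ∧ (x.2 - y.2 : ℕ) < q ∧ f y.1 - g y.2 = f x.1 - g x.2}

lemma card_closeCoincidences_le {f : ℕ → G} (hconv : StrictMono fun i => f (i + 1) - f i) {M : ℕ}
    (g : Fin M → G) (N p q : ℕ) : #(closeCoincidences f g N p q) ≤ M * (p * q) := by
  have hex : ∀ x ∈ closeCoincidences f g N p q, ∃ y : ℕ × Fin M, y.1 < x.1 ∧ y.2 < x.2 ∧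
      x.1 - y.1 < p ∧ (x.2 - y.2 : ℕ) < q ∧ f y.1 - g y.2 = f x.1 - g x.2 :=
    fun x hx => by
      simp only [closeCoincidences, Finset.mem_filter] at hx
      exact hx.2
  choose! y hy₁ hy₂ hp hq heq using hex
  calc #(closeCoincidences f g N p q)
      ≤ #(Finset.univ (α := Fin M) ×ˢ Finset.range p ×ˢ Finset.range q) := by
        refine Finset.card_le_card_of_injOn
          (fun x => (x.2, x.1 - (y x).1, (x.2 : ℕ) - (y x).2)) (fun x hx => ?_)
          fun x hx x' hx' hxx' => ?_
        · simpa using ⟨hp x hx, hq x hx⟩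
        · simp only [Prod.mk.injEq] at hxx'
          obtain ⟨hj, hu, hv⟩ := hxx'
          have hlt := hy₁ x hx
          have hlt' := hy₁ x' hx'
          have hyj : (y x).2 = (y x').2 := by
            have := Fin.lt_def.1 (hy₂ x hx)
            have := Fin.lt_def.1 (hy₂ x' hx')
            have := congrArg Fin.val hj
            exact Fin.ext (by omega)
          have hinj := (strictMono_add_sub_of_convex hconv (Nat.sub_pos_of_lt hlt)).injective
          have hi : (y x).1 = (y x').1 := hinj <| by
            have hx₁ : (y x).1 + (x.1 - (y x).1) = x.1 := by omega
            have hx₁' : (y x').1 + (x.1 - (y x).1) = x'.1 := by omega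
            simp only [hx₁, hx₁', sub_eq_sub_iff_sub_eq_sub.1 (heq x hx).symm,
              sub_eq_sub_iff_sub_eq_sub.1 (heq x' hx').symm, hj, hyj]
          exact Prod.ext (by omega) hj
    _ = M * (p * q) := by simp

/-- Cutting the indices into blocks turns every popular difference into many coincidences between
short increments. -/
lemma card_mul_sub_le_card_closeCoincidences {f : ℕ → G} (hf : StrictMono f) {M : ℕ}
    {g : Fin M → G} (hg : StrictMono g) {N p q t K : ℕ} (hp : 0 < p) (hq : 0 < q)
    (hK : ∀ i < N, ∀ j < M, i / p + j / q < K) {D : Finset G}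
    (hD : ∀ d ∈ D, t ≤ ρ[(Finset.range N).image f,Finset.univ.image g] d) :
    #D * (t - K) ≤ #(closeCoincidences f g N p q) := by
  set S : G → Finset (ℕ × Fin M) := fun d =>
    {x ∈ Finset.range N ×ˢ Finset.univ | f x.1 - g x.2 = d}
  have hS : ∀ d ∈ D, t ≤ #(S d) := fun d hd => (hD d hd).trans <| by
    rw [← Finset.card_sub_eq]
    refine Finset.card_le_card_of_surjOn (Prod.map f g) ?_
    rintro ⟨a, b⟩ hab
    simp only [Finset.coe_filter, Finset.mem_product, Finset.mem_image, Finset.mem_range,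
      Finset.mem_univ, true_and, Set.mem_ofPred_eq] at hab
    obtain ⟨⟨⟨i, hi, rfl⟩, j, rfl⟩, rfl⟩ := hab
    exact ⟨(i, j), by simp [S, hi]⟩
  have hfiber : ∀ d ∈ D, t - K ≤ #{x ∈ closeCoincidences f g N p q | f x.1 - g x.2 = d} := by
    intro d hd
    have hinj : Set.InjOn Prod.fst (S d : Set (ℕ × Fin M)) := fun x hx y hy hxy => by
      have hx := (Finset.mem_filter.1 hx).2
      have hy := (Finset.mem_filter.1 hy).2
      rw [← hy, hxy, sub_right_inj] at hx
      exact Prod.ext hxy (hg.injective hx)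
    refine (Nat.sub_le_sub_right (hS d hd) K).trans <|
      (card_sub_le_card_filter_exists_lt (S d) hinj (φ := fun x => x.1 / p + x.2 / q)
        fun x hx => ?_).trans <| Finset.card_le_card fun x hx => ?_
    · simp only [S, Finset.mem_filter, Finset.mem_product, Finset.mem_range] at hx
      exact hK _ hx.1.1 _ x.2.2
    · simp only [S, closeCoincidences, Finset.mem_filter] at hx ⊢
      obtain ⟨⟨hxN, rfl⟩, y, ⟨-, hyx⟩, hlt₁, hφ⟩ := hx
      have hlt₂ : y.2 < x.2 := hg.lt_iff_lt.1 <| by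
        have := sub_lt_sub_right (hf hlt₁) (g x.2)
        rw [← hyx] at this
        exact sub_lt_sub_iff_left _ |>.1 this
      have hdiv₁ := Nat.div_le_div_right (c := p) hlt₁.le
      have hdiv₂ := Nat.div_le_div_right (c := q) (Fin.lt_def.1 hlt₂).le
      exact ⟨⟨hxN, y, hlt₁, hlt₂, sub_lt_of_div_eq_div hp (by omega),
        sub_lt_of_div_eq_div hq (by omega), hyx⟩, rfl⟩
  calc #D * (t - K) ≤ ∑ d ∈ D, #{x ∈ closeCoincidences f g N p q | f x.1 - g x.2 = d} :=
        Finset.card_nsmul_le_sum _ _ _ hfiber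
    _ = #{x ∈ closeCoincidences f g N p q | f x.1 - g x.2 ∈ D} :=
        Finset.sum_card_fiberwise_eq_card_filter _ _ _
    _ ≤ _ := Finset.card_filter_le _ _

lemma four_mul_div_lt {n i t : ℕ} (hi : i < n) (ht : 0 < t) : 4 * (i / (4 * n / t + 1)) < t := by
  by_contra! h
  have := Nat.div_mul_le_self i (4 * n / t + 1)
  have := Nat.lt_mul_div_succ (4 * n) ht
  have := Nat.mul_le_mul_right (4 * n / t + 1) h
  linarith

lemma mul_four_mul_div_add_one_le {n t : ℕ} (h : t ≤ n) : t * (4 * n / t + 1) ≤ 5 * n := by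
  have := Nat.mul_div_le (4 * n) t
  linarith

theorem isSzemerediTrotterSet_of_convex {f : ℕ → G} (hf : StrictMono f)
    (hconv : StrictMono fun i => f (i + 1) - f i) (N : ℕ) :
    IsSzemerediTrotterSet 75 ((Finset.range N).image f) := by
  intro B t
  have hcard : #((Finset.range N).image f) = N := by
    rw [Finset.card_image_of_injective _ hf.injective, Finset.card_range]
  set D := {d ∈ (Finset.range N).image f - B | t ≤ ρ[(Finset.range N).image f,B] d}
  have hD : ∀ d ∈ D, t ≤ ρ[(Finset.range N).image f,B] d := fun d hd => (Finset.mem_filter.1 hd).2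
  rw [hcard]
  obtain hD₀ | ⟨d, hd⟩ := D.eq_empty_or_nonempty
  · simp [hD₀]
  have htN : t ≤ N := ((hD d hd).trans Finset.addConvolution_le_card_left).trans_eq hcard
  have htB : t ≤ #B := by
    simpa using (hD d hd).trans Finset.addConvolution_le_card_right
  obtain rfl | rfl | ht : t = 0 ∨ t = 1 ∨ 1 < t := by omega
  · simp
  · have hle : #D ≤ N * #B :=
      ((Finset.card_filter_le _ _).trans Finset.card_sub_le).trans_eq (by rw [hcard])
    nlinarith [Nat.mul_le_mul_left N (Nat.le_self_pow two_ne_zero #B)]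
  have hD' : #D * (t - (t + 1) / 2) ≤ #B * ((4 * N / t + 1) * (4 * #B / t + 1)) := by
    refine (card_mul_sub_le_card_closeCoincidences (N := N) hf
      (B.orderEmbOfFin rfl).strictMono (Nat.succ_pos (4 * N / t)) (Nat.succ_pos (4 * #B / t))
      (fun i hi j hj => ?_) fun d hd => ?_).trans (card_closeCoincidences_le hconv _ _ _ _)
    · have := four_mul_div_lt hi ht.pos
      have := four_mul_div_lt hj ht.pos
      simp only [Nat.succ_eq_add_one]
      omega
    · rw [Finset.image_orderEmbOfFin_univ]
      exact hD d hd
  calc t ^ 3 * #D = (#D * t) * (t * t) := by ring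
    _ ≤ (#D * (3 * (t - (t + 1) / 2))) * (t * t) := by
        gcongr
        omega
    _ = 3 * (#D * (t - (t + 1) / 2)) * (t * t) := by ring
    _ ≤ 3 * (#B * ((4 * N / t + 1) * (4 * #B / t + 1))) * (t * t) := by gcongr
    _ = 3 * (#B * ((t * (4 * N / t + 1)) * (t * (4 * #B / t + 1)))) := by ring
    _ ≤ 3 * (#B * ((5 * N) * (5 * #B))) := by
        gcongr 3 * (#B * (?_ * ?_))
        exacts [mul_four_mul_div_add_one_le htN, mul_four_mul_div_add_one_le htB]
    _ = 75 * (N * #B ^ 2) := by ring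

end Convex

section SzemerediTrotter

variable {G : Type*} [AddCommGroup G] [DecidableEq G] {A : Finset G} {K : ℕ}

lemma cast_le_two_mul_two_pow_log (r : ℕ) : (r : ℝ) ≤ 2 * 2 ^ Nat.log 2 r := by
  have h := (Nat.lt_pow_succ_log_self one_lt_two r).le
  rw [pow_succ'] at h
  exact_mod_cast h

lemma log_diffConvolution_lt (A B : Finset G) (d : G) :
    Nat.log 2 (ρ[A,B] d) < Nat.log 2 #A + 1 :=
  Nat.lt_succ_of_le (Nat.log_mono_right Finset.addConvolution_le_card_left)

lemma IsSzemerediTrotterSet.card_le (hA : IsSzemerediTrotterSet K A) {B D : Finset G} {t : ℕ}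
    (ht : 0 < t) (hD : ∀ d ∈ D, t ≤ ρ[A,B] d) : t ^ 3 * #D ≤ K * (#A * #B ^ 2) :=
  (Nat.mul_le_mul_left _ (Finset.card_le_card fun d hd => Finset.mem_filter.2
    ⟨diffConvolution_pos_iff.1 (ht.trans_le (hD d hd)), hD d hd⟩)).trans (hA B t)

lemma IsSzemerediTrotterSet.sum_cube_le (hA : IsSzemerediTrotterSet K A) (B U : Finset G) :
    ∑ d ∈ U, (ρ[A,B] d : ℝ) ^ 3 ≤ 8 * K * (Nat.log 2 #A + 1 : ℕ) * (#A * (#B : ℝ) ^ 2) := by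
  have hlevel : ∀ j, ∑ d ∈ U with Nat.log 2 (ρ[A,B] d) = j, (ρ[A,B] d : ℝ) ^ 3 ≤
      8 * (K * (#A * (#B : ℝ) ^ 2)) := fun j => by
    set V := {d ∈ U | Nat.log 2 (ρ[A,B] d) = j ∧ ρ[A,B] d ≠ 0}
    have hV : (2 ^ j) ^ 3 * #V ≤ K * (#A * #B ^ 2) :=
      hA.card_le (pow_pos two_pos j) fun d hd => by
        obtain ⟨-, rfl, hne⟩ := Finset.mem_filter.1 hd
        exact Nat.pow_log_le_self 2 hne
    calc ∑ d ∈ U with Nat.log 2 (ρ[A,B] d) = j, (ρ[A,B] d : ℝ) ^ 3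
        = ∑ d ∈ V, (ρ[A,B] d : ℝ) ^ 3 := by
          refine (Finset.sum_subset (fun d hd => ?_) fun d hd hdV => ?_).symm
          · simp only [V, Finset.mem_filter] at hd ⊢
            exact ⟨hd.1, hd.2.1⟩
          · simp only [V, Finset.mem_filter, not_and, not_not] at hd hdV
            simp [hdV hd.1 hd.2]
      _ ≤ ∑ _d ∈ V, (2 * 2 ^ j : ℝ) ^ 3 := by
          refine Finset.sum_le_sum fun d hd => ?_
          obtain ⟨-, rfl, -⟩ := Finset.mem_filter.1 hd
          gcongr
          exact cast_le_two_mul_two_pow_log _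
      _ = 8 * (((2 ^ j) ^ 3 * #V : ℕ) : ℝ) := by
          rw [Finset.sum_const, nsmul_eq_mul]
          push_cast
          ring
      _ ≤ 8 * (K * (#A * (#B : ℝ) ^ 2)) := by
          gcongr
          exact_mod_cast hV
  rw [← Finset.sum_fiberwise_of_maps_to (t := Finset.range (Nat.log 2 #A + 1))
    (g := fun d => Nat.log 2 (ρ[A,B] d))
    fun d _ => Finset.mem_range.2 (log_diffConvolution_lt A B d)]
  refine (Finset.sum_le_sum fun j _ => hlevel j).trans_eq ?_
  rw [Finset.sum_const, nsmul_eq_mul, Finset.card_range]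
  ring

lemma IsSzemerediTrotterSet.sum_sq_sq_le (hA : IsSzemerediTrotterSet K A) (B U : Finset G) :
    (∑ d ∈ U, (ρ[A,B] d : ℝ) ^ 2) ^ 2 ≤
      8 * K * (Nat.log 2 #A + 1 : ℕ) * ((#A : ℝ) ^ 2 * (#B : ℝ) ^ 3) := by
  calc (∑ d ∈ U, (ρ[A,B] d : ℝ) ^ 2) ^ 2
      ≤ (∑ d ∈ U, (ρ[A,B] d : ℝ)) * ∑ d ∈ U, (ρ[A,B] d : ℝ) ^ 3 :=
        Finset.sum_sq_le_sum_mul_sum_of_sq_le_mul U (fun _ _ => by positivity)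
          (fun _ _ => by positivity) fun _ _ => by rw [← pow_succ', ← pow_mul]
    _ ≤ (#A * #B) * (8 * K * (Nat.log 2 #A + 1 : ℕ) * (#A * (#B : ℝ) ^ 2)) := by
        gcongr
        · exact_mod_cast sum_diffConvolution_le A B U
        · exact hA.sum_cube_le B U
    _ = _ := by ring

lemma IsSzemerediTrotterSet.sum_sum_pow_four_le (hA : IsSzemerediTrotterSet K A) (B C : Finset G) :
    (∑ b ∈ B, ∑ c ∈ C, (ρ[A,A] (c - b) : ℝ)) ^ 4 ≤
      (8 * K * (Nat.log 2 #A + 1 : ℕ)) ^ 2 * ((#A : ℝ) ^ 4 * ((#B : ℝ) ^ 3 * (#C : ℝ) ^ 3)) := by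
  rw [sum_sum_diffConvolution_sub_eq]
  calc (∑ d ∈ A - B, (ρ[A,B] d : ℝ) * ρ[A,C] d) ^ 4
      = ((∑ d ∈ A - B, (ρ[A,B] d : ℝ) * ρ[A,C] d) ^ 2) ^ 2 := by ring
    _ ≤ ((∑ d ∈ A - B, (ρ[A,B] d : ℝ) ^ 2) * ∑ d ∈ A - B, (ρ[A,C] d : ℝ) ^ 2) ^ 2 := by
        gcongr
        exact Finset.sum_mul_sq_le_sq_mul_sq _ _ _
    _ = (∑ d ∈ A - B, (ρ[A,B] d : ℝ) ^ 2) ^ 2 * (∑ d ∈ A - B, (ρ[A,C] d : ℝ) ^ 2) ^ 2 := by ring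
    _ ≤ (8 * K * (Nat.log 2 #A + 1 : ℕ) * ((#A : ℝ) ^ 2 * (#B : ℝ) ^ 3)) *
        (8 * K * (Nat.log 2 #A + 1 : ℕ) * ((#A : ℝ) ^ 2 * (#C : ℝ) ^ 3)) := by
        gcongr
        · exact hA.sum_sq_sq_le B _
        · exact hA.sum_sq_sq_le C _
    _ = _ := by ring

end SzemerediTrotter

section Walks

lemma three_le_mul_add_inv_add_inv {u v : ℝ} (hu : 0 < u) (hv : 0 < v) :
    3 ≤ u * v + u⁻¹ + v⁻¹ := by
  have huv := Real.log_le_sub_one_of_pos (mul_pos hu hv)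
  have hu' := Real.log_le_sub_one_of_pos (inv_pos.2 hu)
  have hv' := Real.log_le_sub_one_of_pos (inv_pos.2 hv)
  rw [Real.log_mul hu.ne' hv.ne'] at huv
  rw [Real.log_inv] at hu' hv'
  linarith

lemma three_mul_sum_le_walks {ι : Type*} (A : Finset ι) {M : ι → ι → ℝ} (hM : ∀ x y, 0 ≤ M x y)
    (hsymm : ∀ x y, M x y = M y x) {κ : ℝ} (hκ : 0 < κ) :
    3 * ∑ x ∈ A, ∑ y ∈ A, M x y ≤
      (∑ x ∈ A, ∑ y ∈ A, M x y * ((∑ z ∈ A, M x z) * ∑ z ∈ A, M y z)) / κ ^ 2 +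
        2 * (κ * #A) := by
  set n : ι → ℝ := fun x => ∑ z ∈ A, M x z
  have hn : ∀ x, ∀ y ∈ A, M x y ≤ n x := fun x y hy =>
    Finset.single_le_sum (f := M x) (fun _ _ => hM _ _) hy
  have hpt : ∀ x ∈ A, ∀ y ∈ A, 3 * M x y ≤
      M x y * (n x * n y) / κ ^ 2 + κ * (M x y / n x) + κ * (M y x / n y) := by
    intro x hx y hy
    rw [hsymm y x]
    obtain h | h := (hM x y).eq_or_lt
    · simp [← h]
    have hx' : 0 < n x := h.trans_le (hn x y hy)
    have hy' : 0 < n y := h.trans_le (hsymm x y ▸ hn y x hx)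
    calc 3 * M x y = M x y * 3 := mul_comm _ _
      _ ≤ M x y * (n x / κ * (n y / κ) + (n x / κ)⁻¹ + (n y / κ)⁻¹) := by
          gcongr
          exact three_le_mul_add_inv_add_inv (div_pos hx' hκ) (div_pos hy' hκ)
      _ = _ := by field_simp
  have hrow : ∑ x ∈ A, ∑ y ∈ A, κ * (M x y / n x) ≤ κ * #A := by
    calc ∑ x ∈ A, ∑ y ∈ A, κ * (M x y / n x) ≤ ∑ _x ∈ A, κ := by
          refine Finset.sum_le_sum fun x _ => ?_
          rw [← Finset.mul_sum, ← Finset.sum_div]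
          exact mul_le_of_le_one_right hκ.le (div_self_le_one _)
      _ = κ * #A := by rw [Finset.sum_const, nsmul_eq_mul, mul_comm]
  have hcol : ∑ x ∈ A, ∑ y ∈ A, κ * (M y x / n y) ≤ κ * #A := by rwa [Finset.sum_comm]
  have hsum := Finset.sum_le_sum fun x hx => Finset.sum_le_sum (hpt x hx)
  simp only [Finset.sum_add_distrib, ← Finset.mul_sum, ← Finset.sum_div] at hsum hrow hcol ⊢
  linarith

/-- A lower bound for the number of walks of length three in a weighted graph. -/
lemma sum_sum_pow_three_le_walks {ι : Type*} (A : Finset ι) {M : ι → ι → ℝ}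
    (hM : ∀ x y, 0 ≤ M x y) (hsymm : ∀ x y, M x y = M y x) :
    (∑ x ∈ A, ∑ y ∈ A, M x y) ^ 3 ≤ (#A : ℝ) ^ 2 *
      ∑ x ∈ A, ∑ y ∈ A, M x y * ((∑ z ∈ A, M x z) * ∑ z ∈ A, M y z) := by
  set P := ∑ x ∈ A, ∑ y ∈ A, M x y with hP
  set Q := ∑ x ∈ A, ∑ y ∈ A, M x y * ((∑ z ∈ A, M x z) * ∑ z ∈ A, M y z) with hQ
  have hP₀ : 0 ≤ P := Finset.sum_nonneg fun x _ => Finset.sum_nonneg fun y _ => hM x y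
  obtain h | hPpos := hP₀.eq_or_lt
  · have hQ₀ : 0 ≤ Q := Finset.sum_nonneg fun x _ => Finset.sum_nonneg fun y _ =>
      mul_nonneg (hM x y) (mul_nonneg (Finset.sum_nonneg fun z _ => hM x z)
        (Finset.sum_nonneg fun z _ => hM y z))
    rw [← h, zero_pow three_ne_zero]
    positivity
  have hA : 0 < (#A : ℝ) := by
    obtain rfl | h := A.eq_empty_or_nonempty
    · simp [hP] at hPpos
    · exact_mod_cast h.card_pos
  have hκ : P / #A * #A = P := div_mul_cancel₀ _ hA.ne'
  have h := three_mul_sum_le_walks A hM hsymm (div_pos hPpos hA)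
  rw [hκ, ← hP, ← hQ] at h
  have hle : P ≤ Q / (P / #A) ^ 2 := by linarith
  rw [le_div_iff₀ (by positivity)] at hle
  calc P ^ 3 = (#A : ℝ) ^ 2 * (P * (P / #A) ^ 2) := by field_simp
    _ ≤ _ := by gcongr

end Walks

section Triangles

lemma indicator_mul_indicator_eq_ite {ι : Type*} [DecidableEq ι] (A : Finset ι) (x y : ι) :
    𝟙[A] x * 𝟙[A] y = if x ∈ A ∧ y ∈ A then 1 else 0 := by
  simp only [Set.indicator_apply, SetLike.mem_coe, ite_and]
  split_ifs <;> simp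

lemma sum_indicator_sub_mul_eq {G : Type*} [AddCommGroup G] (A D : Finset G) (z : G) (F : G → ℝ) :
    ∑ x ∈ A, 𝟙[D] (x - z) * F (x - z) = ∑ s ∈ D, 𝟙[A] (z + s) * F s := by
  classical
  simp only [Set.indicator_apply, SetLike.mem_coe, ite_mul, one_mul, zero_mul]
  rw [← Finset.sum_filter, ← Finset.sum_filter]
  exact Finset.sum_nbij' (fun x => x - z) (fun s => z + s)
    (fun x hx => by simpa [and_comm] using hx) (fun s hs => by simpa [and_comm] using hs)
    (fun x _ => add_sub_cancel _ _) (fun s _ => add_sub_cancel_left _ _) fun _ _ => rfl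

/-- The two sides are the squared Hilbert–Schmidt norms of `hᵀ h` and of `h hᵀ`. -/
lemma sum_sum_sq_sum_mul_comm {ι κ R : Type*} [CommSemiring R] (s : Finset ι) (t : Finset κ)
    (h : ι → κ → R) :
    ∑ j ∈ t, ∑ j' ∈ t, (∑ i ∈ s, h i j * h i j') ^ 2 =
      ∑ i ∈ s, ∑ i' ∈ s, (∑ j ∈ t, h i j * h i' j) ^ 2 := by
  simp only [sq, Finset.sum_mul_sum]
  calc ∑ j ∈ t, ∑ j' ∈ t, ∑ i ∈ s, ∑ i' ∈ s, h i j * h i j' * (h i' j * h i' j')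
      = ∑ i ∈ s, ∑ j ∈ t, ∑ i' ∈ s, ∑ j' ∈ t, h i j * h i j' * (h i' j * h i' j') := by
        simp only [Finset.sum_comm (s := t) (t := s)]
    _ = ∑ i ∈ s, ∑ i' ∈ s, ∑ j ∈ t, ∑ j' ∈ t, h i j * h i' j * (h i j' * h i' j') := by
        refine Finset.sum_congr rfl fun i _ => Finset.sum_comm.trans ?_
        simp only [mul_mul_mul_comm]

variable {G : Type*} [AddCommGroup G] [DecidableEq G]

lemma diffConvolution_sub_eq_sum_indicator (A : Finset G) {x y : G} (hy : y ∈ A) :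
    (ρ[A,A] (x - y) : ℝ) = ∑ u ∈ A - A, 𝟙[A] (x - u) * 𝟙[A] (y - u) := by
  simp only [indicator_mul_indicator_eq_ite]
  rw [Finset.sum_boole, diffConvolution_eq_card, Nat.cast_inj]
  refine Finset.card_nbij' (fun b => y - b) (fun u => y - u) (fun b hb => ?_) (fun u hu => ?_)
    (fun b _ => sub_sub_cancel _ _) (fun u _ => sub_sub_cancel _ _)
  · obtain ⟨hb, hbA⟩ := Finset.mem_filter.1 hb
    refine Finset.mem_filter.2 ⟨Finset.sub_mem_sub hy hb, ?_, by rwa [sub_sub_cancel]⟩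
    rwa [show x - (y - b) = b + (x - y) by abel]
  · obtain ⟨-, hx, hy⟩ := Finset.mem_filter.1 hu
    refine Finset.mem_filter.2 ⟨hy, ?_⟩
    rwa [show y - u + (x - y) = x - u by abel]

lemma sum_sum_mul_diffConvolution_eq_sum_sq (A : Finset G) (v : G → ℝ) :
    ∑ x ∈ A, ∑ y ∈ A, v x * v y * ρ[A,A] (x - y) =
      ∑ u ∈ A - A, (∑ x ∈ A, v x * 𝟙[A] (x - u)) ^ 2 := by
  calc ∑ x ∈ A, ∑ y ∈ A, v x * v y * ρ[A,A] (x - y)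
      = ∑ x ∈ A, ∑ y ∈ A, ∑ u ∈ A - A, v x * 𝟙[A] (x - u) * (v y * 𝟙[A] (y - u)) := by
        refine Finset.sum_congr rfl fun x _ => Finset.sum_congr rfl fun y hy => ?_
        rw [diffConvolution_sub_eq_sum_indicator A hy, Finset.mul_sum]
        exact Finset.sum_congr rfl fun u _ => mul_mul_mul_comm _ _ _ _
    _ = ∑ x ∈ A, ∑ u ∈ A - A, ∑ y ∈ A, v x * 𝟙[A] (x - u) * (v y * 𝟙[A] (y - u)) :=
        Finset.sum_congr rfl fun x _ => Finset.sum_comm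
    _ = ∑ u ∈ A - A, (∑ x ∈ A, v x * 𝟙[A] (x - u)) ^ 2 := by
        rw [Finset.sum_comm]
        simp only [sq, Finset.sum_mul_sum]

lemma sum_sum_mul_diffConvolution_le_card_mul (A : Finset G) (M : G → G → ℝ) :
    ∑ x ∈ A, ∑ y ∈ A, (∑ z ∈ A, M x z) * (∑ z ∈ A, M y z) * ρ[A,A] (x - y) ≤
      #A * ∑ z ∈ A, ∑ x ∈ A, ∑ y ∈ A, M x z * M y z * ρ[A,A] (x - y) := by
  simp only [sum_sum_mul_diffConvolution_eq_sum_sq A fun x => ∑ z ∈ A, M x z,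
    fun z => sum_sum_mul_diffConvolution_eq_sum_sq A fun x => M x z]
  rw [Finset.sum_comm, Finset.mul_sum]
  refine Finset.sum_le_sum fun u _ => ?_
  have hswap : ∑ x ∈ A, (∑ z ∈ A, M x z) * 𝟙[A] (x - u) =
      ∑ z ∈ A, ∑ x ∈ A, M x z * 𝟙[A] (x - u) := by
    simp only [Finset.sum_mul]
    exact Finset.sum_comm
  rw [hswap]
  exact sq_sum_le_card_mul_sum_sq

/-- The number of triangles on the vertex set `A` with two sides in the difference set `D`, weighted
by the number of representations of the third side as a difference of elements of `A`. -/
noncomputable def weightedTriangles (A D : Finset G) : ℝ :=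
  ∑ z ∈ A, ∑ x ∈ A, ∑ y ∈ A, 𝟙[D] (x - z) * 𝟙[D] (y - z) * ρ[A,A] (x - y)

lemma sum_sum_indicator_sub_eq_sum_diffConvolution (A D : Finset G) :
    ∑ x ∈ A, ∑ y ∈ A, 𝟙[D] (x - y) = ∑ d ∈ D, (ρ[A,A] d : ℝ) := by
  rw [Finset.sum_comm, sum_sum_sub_eq_sum_diffConvolution_mul A A
    (Finset.subset_union_right (s₁ := D)) 𝟙[D]]
  refine (Finset.sum_subset_zero_on_sdiff Finset.subset_union_left (fun d hd => ?_)
    fun d hd => ?_).symm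
  · simp [Finset.mem_sdiff.1 hd]
  · simp [hd]

lemma mul_sum_pow_three_le_weightedTriangles {A D : Finset G} (hneg : ∀ d, -d ∈ D ↔ d ∈ D)
    {t : ℝ} (ht : 0 ≤ t) (hD : ∀ d ∈ D, t ≤ ρ[A,A] d) :
    t * (∑ d ∈ D, (ρ[A,A] d : ℝ)) ^ 3 ≤ (#A : ℝ) ^ 3 * weightedTriangles A D := by
  set M : G → G → ℝ := fun x y => 𝟙[D] (x - y) with hMdef
  have hM : ∀ x y, 0 ≤ M x y := fun x y => Set.indicator_nonneg (fun _ _ => zero_le_one) _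
  have hsymm : ∀ x y, M x y = M y x := fun x y => by
    simp only [hMdef, Set.indicator_apply, SetLike.mem_coe, ← neg_sub y x, hneg]
  have hrow : ∀ x, 0 ≤ ∑ z ∈ A, M x z := fun x => Finset.sum_nonneg fun z _ => hM x z
  have hMρ : ∀ x y, t * M x y ≤ ρ[A,A] (x - y) := fun x y => by
    by_cases h : x - y ∈ D
    · simpa [hMdef, h] using hD _ h
    · simp [hMdef, h]
  calc t * (∑ d ∈ D, (ρ[A,A] d : ℝ)) ^ 3
      = t * (∑ x ∈ A, ∑ y ∈ A, M x y) ^ 3 := by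
        rw [← sum_sum_indicator_sub_eq_sum_diffConvolution]
    _ ≤ t * ((#A : ℝ) ^ 2 * ∑ x ∈ A, ∑ y ∈ A, M x y * ((∑ z ∈ A, M x z) * ∑ z ∈ A, M y z)) := by
        gcongr
        exact sum_sum_pow_three_le_walks A hM hsymm
    _ = (#A : ℝ) ^ 2 * ∑ x ∈ A, ∑ y ∈ A, t * M x y * ((∑ z ∈ A, M x z) * ∑ z ∈ A, M y z) := by
        rw [mul_left_comm]
        simp only [Finset.mul_sum, mul_assoc]
    _ ≤ (#A : ℝ) ^ 2 *
          ∑ x ∈ A, ∑ y ∈ A, (∑ z ∈ A, M x z) * (∑ z ∈ A, M y z) * ρ[A,A] (x - y) := by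
        refine mul_le_mul_of_nonneg_left
          (Finset.sum_le_sum fun x _ => Finset.sum_le_sum fun y _ => ?_) (by positivity)
        rw [mul_comm]
        exact mul_le_mul_of_nonneg_left (hMρ x y) (mul_nonneg (hrow x) (hrow y))
    _ ≤ (#A : ℝ) ^ 2 * (#A * weightedTriangles A D) := by
        gcongr
        exact sum_sum_mul_diffConvolution_le_card_mul A M
    _ = _ := by ring

lemma weightedTriangles_eq_sum_sides (A D : Finset G) :
    weightedTriangles A D =
      ∑ p ∈ D ×ˢ D, (∑ z ∈ A, 𝟙[A] (z + p.1) * 𝟙[A] (z + p.2)) * (ρ[A,A] (p.1 - p.2) : ℝ) := by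
  have hz : ∀ z, ∑ x ∈ A, ∑ y ∈ A, 𝟙[D] (x - z) * 𝟙[D] (y - z) * (ρ[A,A] (x - y) : ℝ) =
      ∑ s ∈ D, ∑ s' ∈ D, 𝟙[A] (z + s) * 𝟙[A] (z + s') * (ρ[A,A] (s - s') : ℝ) := fun z => by
    have hy := fun x => sum_indicator_sub_mul_eq A D z fun d => (ρ[A,A] (x - z - d) : ℝ)
    have hx := sum_indicator_sub_mul_eq A D z fun s =>
      ∑ s' ∈ D, 𝟙[A] (z + s') * (ρ[A,A] (s - s') : ℝ)
    simp only [← hy, sub_sub_sub_cancel_right, Finset.mul_sum, ← mul_assoc] at hx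
    exact hx
  simp only [weightedTriangles, hz, Finset.sum_mul, Finset.sum_product]
  rw [Finset.sum_comm]
  exact Finset.sum_congr rfl fun s _ => Finset.sum_comm

lemma sum_indicator_mul_indicator_le (A D : Finset G) (z w : G) :
    ∑ s ∈ D, 𝟙[A] (z + s) * 𝟙[A] (w + s) ≤ (ρ[A,A] (w - z) : ℝ) := by
  simp only [indicator_mul_indicator_eq_ite]
  rw [Finset.sum_boole, diffConvolution_eq_card, Nat.cast_le]
  refine Finset.card_le_card_of_injOn (fun s => z + s) (fun s hs => ?_)
    fun _ _ _ _ h => add_left_cancel h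
  obtain ⟨-, hz, hw⟩ := Finset.mem_filter.1 hs
  refine Finset.mem_filter.2 ⟨hz, ?_⟩
  rwa [show z + s + (w - z) = w + s by abel]

lemma weightedTriangles_sq_le (A D : Finset G) :
    weightedTriangles A D ^ 2 ≤
      (∑ d ∈ A - A, (ρ[A,A] d : ℝ) ^ 3) * ∑ p ∈ D ×ˢ D, (ρ[A,A] (p.1 - p.2) : ℝ) ^ 2 := by
  have h₀ : ∀ z w s, 0 ≤ 𝟙[A] (z + s) * 𝟙[A] (w + s) := fun z w s => by
    rw [indicator_mul_indicator_eq_ite]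
    positivity
  rw [weightedTriangles_eq_sum_sides]
  refine (Finset.sum_mul_sq_le_sq_mul_sq _ _ _).trans ?_
  gcongr
  calc ∑ p ∈ D ×ˢ D, (∑ z ∈ A, 𝟙[A] (z + p.1) * 𝟙[A] (z + p.2)) ^ 2
      = ∑ z ∈ A, ∑ w ∈ A, (∑ s ∈ D, 𝟙[A] (z + s) * 𝟙[A] (w + s)) ^ 2 := by
        rw [Finset.sum_product]
        exact sum_sum_sq_sum_mul_comm A D fun z s => 𝟙[A] (z + s)
    _ ≤ ∑ z ∈ A, ∑ w ∈ A, (ρ[A,A] (w - z) : ℝ) ^ 2 := by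
        gcongr with z _ w _
        · exact Finset.sum_nonneg fun s _ => h₀ z w s
        · exact sum_indicator_mul_indicator_le A D z w
    _ = ∑ d ∈ A - A, (ρ[A,A] d : ℝ) ^ 3 := by
        rw [sum_sum_sub_eq_sum_diffConvolution_mul A A subset_rfl fun d => (ρ[A,A] d : ℝ) ^ 2]
        exact Finset.sum_congr rfl fun d _ => (pow_succ' _ _).symm

end Triangles

section Levels

lemma exists_sum_le_mul_sum_fiber {ι : Type*} (s : Finset ι) (w : ι → ℝ) {f : ι → ℕ} {L : ℕ}
    (hL : 0 < L) (hf : ∀ x ∈ s, f x < L) :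
    ∃ j, ∑ x ∈ s, w x ≤ L * ∑ x ∈ s with f x = j, w x := by
  have hL' : (0 : ℝ) < L := Nat.cast_pos.2 hL
  obtain ⟨j, -, hj⟩ := Finset.exists_le_sum_fiber_of_maps_to_of_nsmul_le_sum
    (t := Finset.range L) (b := (∑ x ∈ s, w x) / L) (fun x hx => Finset.mem_range.2 (hf x hx))
    (Finset.nonempty_range_iff.2 hL.ne')
    (by rw [Finset.card_range, nsmul_eq_mul, mul_div_cancel₀ _ hL'.ne'])
  exact ⟨j, (div_le_iff₀' hL').1 hj⟩

variable {G : Type*} [AddCommGroup G] [DecidableEq G]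

/-- The differences of elements of `A` with at least `2 ^ j` but fewer than `2 ^ (j + 1)`
representations: a dyadic level of the representation function. -/
def diffLevel (A : Finset G) (j : ℕ) : Finset G :=
  {d ∈ A - A | Nat.log 2 (ρ[A,A] d) = j}

variable {A : Finset G} {j : ℕ} {d : G}

lemma two_pow_le_diffConvolution (hd : d ∈ diffLevel A j) : 2 ^ j ≤ ρ[A,A] d := by
  obtain ⟨hdA, rfl⟩ := Finset.mem_filter.1 hd
  exact Nat.pow_log_le_self 2 (diffConvolution_pos_iff.2 hdA).ne'

lemma diffConvolution_le_two_mul_two_pow (hd : d ∈ diffLevel A j) :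
    (ρ[A,A] d : ℝ) ≤ 2 * 2 ^ j := by
  obtain ⟨-, rfl⟩ := Finset.mem_filter.1 hd
  exact cast_le_two_mul_two_pow_log _

lemma neg_mem_diffLevel_iff : -d ∈ diffLevel A j ↔ d ∈ diffLevel A j := by
  simp only [diffLevel, Finset.mem_filter, ← diffConvolution_pos_iff, diffConvolution_self_neg]

lemma two_pow_le_cast_diffConvolution (hd : d ∈ diffLevel A j) : (2 : ℝ) ^ j ≤ ρ[A,A] d := by
  exact_mod_cast two_pow_le_diffConvolution hd

lemma two_pow_mul_card_diffLevel_le (A : Finset G) (j : ℕ) :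
    2 ^ j * (#(diffLevel A j) : ℝ) ≤ ∑ d ∈ diffLevel A j, (ρ[A,A] d : ℝ) := by
  rw [mul_comm, ← nsmul_eq_mul]
  exact Finset.card_nsmul_le_sum _ _ _ fun d hd => two_pow_le_cast_diffConvolution hd

lemma sum_diffLevel_le (A : Finset G) (j : ℕ) :
    ∑ d ∈ diffLevel A j, (ρ[A,A] d : ℝ) ≤ 2 * 2 ^ j * #(diffLevel A j) := by
  rw [mul_comm, ← nsmul_eq_mul]
  exact Finset.sum_le_card_nsmul _ _ _ fun d hd => diffConvolution_le_two_mul_two_pow hd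

lemma exists_addEnergy_le_sum_diffLevel (A : Finset G) :
    ∃ j, (E[A] : ℝ) ≤
      (Nat.log 2 #A + 1 : ℕ) * (2 * 2 ^ j * ∑ d ∈ diffLevel A j, (ρ[A,A] d : ℝ)) := by
  obtain ⟨j, hj⟩ := exists_sum_le_mul_sum_fiber (A - A) (fun d => (ρ[A,A] d : ℝ) ^ 2)
    (Nat.succ_pos _) fun d _ => log_diffConvolution_lt A A d
  refine ⟨j, ?_⟩
  rw [addEnergy_eq_sum_diffConvolution_sq]
  push_cast [Finset.mul_sum] at hj ⊢
  refine hj.trans (Finset.sum_le_sum fun d hd => ?_)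
  rw [sq]
  have := diffConvolution_le_two_mul_two_pow hd
  gcongr

variable {K : ℕ}

lemma IsSzemerediTrotterSet.card_diffLevel_le (hA : IsSzemerediTrotterSet K A) (j : ℕ) :
    (#(diffLevel A j) : ℝ) * (2 ^ j) ^ 3 ≤ K * (#A : ℝ) ^ 3 := by
  have h := hA.card_le (pow_pos two_pos j) fun d hd => two_pow_le_diffConvolution (A := A) hd
  rw [mul_comm, ← pow_succ'] at h
  exact_mod_cast h

lemma sum_filter_sub_mem_sq_le (A D F : Finset G) {r : ℝ} (hr : 0 ≤ r)
    (hF : ∀ d ∈ F, ρ[A,A] d ≤ r) :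
    ∑ p ∈ D ×ˢ D with p.1 - p.2 ∈ F, (ρ[A,A] (p.1 - p.2) : ℝ) ^ 2 ≤
      r * ∑ b ∈ D, ∑ c ∈ D, (ρ[A,A] (c - b) : ℝ) := by
  calc ∑ p ∈ D ×ˢ D with p.1 - p.2 ∈ F, (ρ[A,A] (p.1 - p.2) : ℝ) ^ 2
      ≤ ∑ p ∈ D ×ˢ D with p.1 - p.2 ∈ F, r * (ρ[A,A] (p.1 - p.2) : ℝ) := by
        refine Finset.sum_le_sum fun p hp => ?_
        rw [sq]
        exact mul_le_mul_of_nonneg_right (hF _ (Finset.mem_filter.1 hp).2) (Nat.cast_nonneg _)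
    _ ≤ ∑ p ∈ D ×ˢ D, r * (ρ[A,A] (p.1 - p.2) : ℝ) :=
        Finset.sum_le_sum_of_subset_of_nonneg (Finset.filter_subset _ _)
          fun p _ _ => mul_nonneg hr (Nat.cast_nonneg _)
    _ = _ := by rw [← Finset.mul_sum, Finset.sum_product_right]

lemma mul_sum_filter_sub_mem_sq_le {D : Finset G} (hneg : ∀ d, -d ∈ D ↔ d ∈ D) (F : Finset G)
    {t r : ℝ} (ht : 0 ≤ t) (hD : ∀ d ∈ D, t ≤ ρ[A,A] d) (hF : ∀ d ∈ F, ρ[A,A] d ≤ r) :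
    t * ∑ p ∈ D ×ˢ D with p.1 - p.2 ∈ F, (ρ[A,A] (p.1 - p.2) : ℝ) ^ 2 ≤
      r ^ 2 * ∑ b ∈ D, ∑ c ∈ F, (ρ[A,A] (c - b) : ℝ) := by
  set T := {p ∈ D ×ˢ D | p.1 - p.2 ∈ F} with hT
  let φ : G × G → G × G := fun p => (-p.2, p.1 - p.2)
  have hφ : Set.InjOn φ T := fun p _ q _ h => by
    obtain ⟨h₂, h₁⟩ := Prod.mk.inj h
    rw [neg_inj] at h₂
    rw [h₂, sub_left_inj] at h₁
    exact Prod.ext h₁ h₂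
  have hmaps : T.image φ ⊆ D ×ˢ F := Finset.image_subset_iff.2 fun p hp => by
    simpa [φ, hneg, hT, and_assoc] using (Finset.mem_filter.1 hp).imp_left
      fun h => (Finset.mem_product.1 h).2
  rw [Finset.mul_sum]
  calc ∑ p ∈ T, t * (ρ[A,A] (p.1 - p.2) : ℝ) ^ 2
      ≤ ∑ p ∈ T, r ^ 2 * ρ[A,A] ((φ p).2 - (φ p).1) := Finset.sum_le_sum fun p hp => by
        obtain ⟨hpD, hpF⟩ := Finset.mem_filter.1 hp
        rw [mul_comm, show (φ p).2 - (φ p).1 = p.1 by simp [φ]]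
        gcongr
        · exact hF _ hpF
        · exact hD _ (Finset.mem_product.1 hpD).1
    _ = r ^ 2 * ∑ q ∈ T.image φ, (ρ[A,A] (q.2 - q.1) : ℝ) := by
        rw [Finset.sum_image hφ, Finset.mul_sum]
    _ ≤ r ^ 2 * ∑ q ∈ D ×ˢ F, (ρ[A,A] (q.2 - q.1) : ℝ) := by
        gcongr
    _ = _ := by rw [Finset.sum_product]

lemma IsSzemerediTrotterSet.sum_filter_sub_mem_diffLevel_pow_four_le_of_le
    (hA : IsSzemerediTrotterSet K A) {j i : ℕ} (hij : i ≤ j) :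
    (2 ^ j) ^ 5 * (∑ p ∈ diffLevel A j ×ˢ diffLevel A j with p.1 - p.2 ∈ diffLevel A i,
        (ρ[A,A] (p.1 - p.2) : ℝ) ^ 2) ^ 4 ≤
      2 ^ 14 * K ^ 5 * (Nat.log 2 #A + 1 : ℕ) ^ 2 *
        ((#A : ℝ) ^ 13 * (#(diffLevel A j) : ℝ) ^ 3) := by
  set D := diffLevel A j
  set L : ℝ := ((Nat.log 2 #A + 1 : ℕ) : ℝ)
  set X := ∑ p ∈ D ×ˢ D with p.1 - p.2 ∈ diffLevel A i, (ρ[A,A] (p.1 - p.2) : ℝ) ^ 2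
  set Y := ∑ b ∈ D, ∑ c ∈ D, (ρ[A,A] (c - b) : ℝ)
  set t : ℝ := 2 ^ j
  have hX₀ : 0 ≤ X := Finset.sum_nonneg fun _ _ => sq_nonneg _
  have hX : X ≤ 2 * t * Y := sum_filter_sub_mem_sq_le A D _ (by positivity) fun d hd =>
    (diffConvolution_le_two_mul_two_pow hd).trans
      (mul_le_mul_of_nonneg_left (pow_le_pow_right₀ one_le_two hij) two_pos.le)
  have hY : Y ^ 4 ≤ (8 * K * L) ^ 2 * (#A ^ 4 * (#D ^ 3 * #D ^ 3)) := hA.sum_sum_pow_four_le D D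
  have hD : #D * t ^ 3 ≤ K * #A ^ 3 := hA.card_diffLevel_le j
  calc t ^ 5 * X ^ 4 ≤ t ^ 5 * (2 * t * Y) ^ 4 := by gcongr
    _ = 2 ^ 4 * t ^ 9 * Y ^ 4 := by ring
    _ ≤ 2 ^ 8 * t ^ 9 * ((8 * K * L) ^ 2 * (#A ^ 4 * (#D ^ 3 * #D ^ 3))) := by
        gcongr <;> norm_num
    _ = 2 ^ 14 * K ^ 2 * L ^ 2 * #A ^ 4 * #D ^ 3 * (#D * t ^ 3) ^ 3 := by ring
    _ ≤ 2 ^ 14 * K ^ 2 * L ^ 2 * #A ^ 4 * #D ^ 3 * (K * #A ^ 3) ^ 3 := by gcongr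
    _ = _ := by ring

lemma IsSzemerediTrotterSet.sum_filter_sub_mem_diffLevel_pow_four_le_of_ge
    (hA : IsSzemerediTrotterSet K A) {j i : ℕ} (hji : j ≤ i) :
    (2 ^ j) ^ 5 * (∑ p ∈ diffLevel A j ×ˢ diffLevel A j with p.1 - p.2 ∈ diffLevel A i,
        (ρ[A,A] (p.1 - p.2) : ℝ) ^ 2) ^ 4 ≤
      2 ^ 14 * K ^ 5 * (Nat.log 2 #A + 1 : ℕ) ^ 2 *
        ((#A : ℝ) ^ 13 * (#(diffLevel A j) : ℝ) ^ 3) := by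
  set D := diffLevel A j
  set L : ℝ := ((Nat.log 2 #A + 1 : ℕ) : ℝ)
  set X := ∑ p ∈ D ×ˢ D with p.1 - p.2 ∈ diffLevel A i, (ρ[A,A] (p.1 - p.2) : ℝ) ^ 2
  set Y := ∑ b ∈ D, ∑ c ∈ diffLevel A i, (ρ[A,A] (c - b) : ℝ)
  set δ : ℝ := (#(diffLevel A i) : ℝ)
  set t : ℝ := 2 ^ j
  set r : ℝ := 2 ^ i
  have hX₀ : 0 ≤ X := Finset.sum_nonneg fun _ _ => sq_nonneg _
  have hX : t * X ≤ (2 * r) ^ 2 * Y := mul_sum_filter_sub_mem_sq_le (fun _ => neg_mem_diffLevel_iff)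
    _ (by positivity) (fun _ hd => two_pow_le_cast_diffConvolution hd)
    fun _ hd => diffConvolution_le_two_mul_two_pow hd
  have hY : Y ^ 4 ≤ (8 * K * L) ^ 2 * (#A ^ 4 * (#D ^ 3 * δ ^ 3)) := hA.sum_sum_pow_four_le D _
  have hδ : δ * r ^ 3 ≤ K * #A ^ 3 := hA.card_diffLevel_le i
  have htr : t ≤ r := pow_le_pow_right₀ one_le_two hji
  calc t ^ 5 * X ^ 4 = t * (t * X) ^ 4 := by ring
    _ ≤ r * ((2 * r) ^ 2 * Y) ^ 4 := by gcongr
    _ = 2 ^ 8 * r ^ 9 * Y ^ 4 := by ring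
    _ ≤ 2 ^ 8 * r ^ 9 * ((8 * K * L) ^ 2 * (#A ^ 4 * (#D ^ 3 * δ ^ 3))) := by gcongr
    _ = 2 ^ 14 * K ^ 2 * L ^ 2 * #A ^ 4 * #D ^ 3 * (δ * r ^ 3) ^ 3 := by ring
    _ ≤ 2 ^ 14 * K ^ 2 * L ^ 2 * #A ^ 4 * #D ^ 3 * (K * #A ^ 3) ^ 3 := by gcongr
    _ = _ := by ring

lemma IsSzemerediTrotterSet.sum_diffLevel_sub_sq_pow_four_le (hA : IsSzemerediTrotterSet K A)
    (j : ℕ) :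
    (2 ^ j) ^ 5 *
        (∑ p ∈ diffLevel A j ×ˢ diffLevel A j, (ρ[A,A] (p.1 - p.2) : ℝ) ^ 2) ^ 4 ≤
      2 ^ 14 * K ^ 5 * (Nat.log 2 #A + 1 : ℕ) ^ 6 *
        ((#A : ℝ) ^ 13 * (#(diffLevel A j) : ℝ) ^ 3) := by
  set D := diffLevel A j
  set L := Nat.log 2 #A + 1
  set X := fun i => ∑ p ∈ D ×ˢ D with p.1 - p.2 ∈ diffLevel A i, (ρ[A,A] (p.1 - p.2) : ℝ) ^ 2
  have hX : ∀ i, (2 ^ j) ^ 5 * X i ^ 4 ≤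
      2 ^ 14 * K ^ 5 * L ^ 2 * ((#A : ℝ) ^ 13 * (#D : ℝ) ^ 3) := fun i =>
    (le_total i j).elim hA.sum_filter_sub_mem_diffLevel_pow_four_le_of_le
      hA.sum_filter_sub_mem_diffLevel_pow_four_le_of_ge
  have hsupp : ∑ p ∈ D ×ˢ D, (ρ[A,A] (p.1 - p.2) : ℝ) ^ 2 =
      ∑ p ∈ D ×ˢ D with p.1 - p.2 ∈ A - A, (ρ[A,A] (p.1 - p.2) : ℝ) ^ 2 := by
    refine (Finset.sum_filter_of_ne fun p _ hp => diffConvolution_pos_iff.1 ?_).symm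
    exact Nat.pos_of_ne_zero fun h => hp (by simp [h])
  obtain ⟨i, hi⟩ : ∃ i, ∑ p ∈ D ×ˢ D, (ρ[A,A] (p.1 - p.2) : ℝ) ^ 2 ≤ L * X i := by
    simp only [hsupp, X, diffLevel, Finset.mem_filter (s := A - A), ← Finset.filter_filter]
    exact exists_sum_le_mul_sum_fiber _ _ (Nat.succ_pos _) fun p _ => log_diffConvolution_lt A A _
  calc _ ≤ (2 ^ j) ^ 5 * (L * X i) ^ 4 := by gcongr
    _ = L ^ 4 * ((2 ^ j) ^ 5 * X i ^ 4) := by ring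
    _ ≤ L ^ 4 * (2 ^ 14 * K ^ 5 * L ^ 2 * ((#A : ℝ) ^ 13 * (#D : ℝ) ^ 3)) :=
        mul_le_mul_of_nonneg_left (hX i) (by positivity)
    _ = _ := by ring

lemma pow_sixteen_mul_pow_le {t P W X L N δ K : ℝ} (ht : 0 ≤ t) (hP : 0 ≤ P)
    (hN : 0 ≤ N) (hK : 0 ≤ K) (hδ : 0 ≤ δ) (htδ : t * δ ≤ P)
    (hPW : t * P ^ 3 ≤ N ^ 3 * W) (hWX : W ^ 2 ≤ 8 * K * L * N ^ 3 * X)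
    (htX : t ^ 5 * X ^ 4 ≤ 2 ^ 14 * K ^ 5 * L ^ 6 * (N ^ 13 * δ ^ 3)) :
    t ^ 16 * P ^ 21 ≤ 2 ^ 26 * K ^ 9 * L ^ 10 * N ^ 49 := by
  obtain rfl | hPpos := hP.eq_or_lt
  · rw [zero_pow (by norm_num), mul_zero]
    positivity
  refine le_of_mul_le_mul_right ?_ (pow_pos hPpos 3)
  calc t ^ 16 * P ^ 21 * P ^ 3 = t ^ 8 * (t * P ^ 3) ^ 8 := by ring
    _ ≤ t ^ 8 * (N ^ 3 * W) ^ 8 := by gcongr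
    _ = t ^ 8 * N ^ 24 * (W ^ 2) ^ 4 := by ring
    _ ≤ t ^ 8 * N ^ 24 * (8 * K * L * N ^ 3 * X) ^ 4 := by gcongr
    _ = 2 ^ 12 * K ^ 4 * L ^ 4 * N ^ 36 * t ^ 3 * (t ^ 5 * X ^ 4) := by ring
    _ ≤ 2 ^ 12 * K ^ 4 * L ^ 4 * N ^ 36 * t ^ 3 *
        (2 ^ 14 * K ^ 5 * L ^ 6 * (N ^ 13 * δ ^ 3)) := by gcongr
    _ = 2 ^ 26 * K ^ 9 * L ^ 10 * N ^ 49 * (t * δ) ^ 3 := by ring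
    _ ≤ 2 ^ 26 * K ^ 9 * L ^ 10 * N ^ 49 * P ^ 3 := by gcongr

lemma IsSzemerediTrotterSet.addEnergy_pow_le (hA : IsSzemerediTrotterSet K A) :
    (E[A] : ℝ) ^ 26 ≤ 2 ^ 57 * K ^ 14 * (Nat.log 2 #A + 1 : ℕ) ^ 36 * (#A : ℝ) ^ 64 := by
  obtain ⟨j, hE⟩ := exists_addEnergy_le_sum_diffLevel A
  set D := diffLevel A j
  set L : ℝ := ((Nat.log 2 #A + 1 : ℕ) : ℝ)
  set t : ℝ := 2 ^ j
  set P := ∑ d ∈ D, (ρ[A,A] d : ℝ)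
  have hP₀ : 0 ≤ P := Finset.sum_nonneg fun _ _ => Nat.cast_nonneg _
  have hW : weightedTriangles A D ^ 2 ≤
      8 * K * L * #A ^ 3 * ∑ p ∈ D ×ˢ D, (ρ[A,A] (p.1 - p.2) : ℝ) ^ 2 := by
    refine (weightedTriangles_sq_le A D).trans (mul_le_mul_of_nonneg_right
      ((hA.sum_cube_le A (A - A)).trans_eq ?_) (Finset.sum_nonneg fun _ _ => sq_nonneg _))
    ring
  have htP : t ^ 16 * P ^ 21 ≤ 2 ^ 26 * K ^ 9 * L ^ 10 * #A ^ 49 :=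
    pow_sixteen_mul_pow_le (by positivity) hP₀ (by positivity) (by positivity) (by positivity)
      (two_pow_mul_card_diffLevel_le A j)
      (mul_sum_pow_three_le_weightedTriangles (fun _ => neg_mem_diffLevel_iff) (by positivity)
        fun _ hd => two_pow_le_cast_diffConvolution hd) hW (hA.sum_diffLevel_sub_sq_pow_four_le j)
  have ht2P : t ^ 2 * P ≤ 2 * K * #A ^ 3 := by
    calc t ^ 2 * P ≤ t ^ 2 * (2 * t * #D) :=
          mul_le_mul_of_nonneg_left (sum_diffLevel_le A j) (by positivity)
      _ = 2 * (#D * t ^ 3) := by ring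
      _ ≤ 2 * (K * #A ^ 3) := mul_le_mul_of_nonneg_left (hA.card_diffLevel_le j) two_pos.le
      _ = _ := by ring
  calc (E[A] : ℝ) ^ 26 ≤ (L * (2 * t * P)) ^ 26 := by gcongr
    _ = 2 ^ 26 * L ^ 26 * (t ^ 16 * P ^ 21) * (t ^ 2 * P) ^ 5 := by ring
    _ ≤ 2 ^ 26 * L ^ 26 * (2 ^ 26 * K ^ 9 * L ^ 10 * #A ^ 49) * (2 * K * #A ^ 3) ^ 5 := by gcongr
    _ = _ := by ring

end Levels

/-! ### Exponential sums and their dilates -/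

section Characters

lemma continuous_fourierChar_mul (r : ℝ) : Continuous fun α : ℝ => (𝐞 (r * α) : ℂ) :=
  continuous_subtype_val.comp (Real.continuous_fourierChar.comp (continuous_const_mul r))

lemma fourierChar_intCast (k : ℤ) : 𝐞 (k : ℝ) = 1 := by
  rw [Circle.ext_iff, Real.fourierChar_apply, Circle.coe_one, Complex.exp_eq_one_iff]
  exact ⟨k, by push_cast; ring⟩

lemma integral_fourierChar (k : ℤ) (x : ℝ) :
    ∫ α in x..x + 1, (𝐞 (k * α) : ℂ) = if k = 0 then 1 else 0 := by
  split_ifs with hk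
  · simp [hk]
  · have hc : (2 * Real.pi * k * Complex.I : ℂ) ≠ 0 := by simp [hk, Real.pi_ne_zero]
    have hexp : ∀ α : ℝ, (𝐞 (k * α) : ℂ) = Complex.exp ((2 * Real.pi * k * Complex.I : ℂ) * α) :=
      fun α => by rw [Real.fourierChar_apply]; congr 1; push_cast; ring
    simp only [hexp]
    rw [integral_exp_mul_complex hc, ← hexp, ← hexp, mul_add, mul_one, AddChar.map_add_eq_mul,
      fourierChar_intCast, mul_one, sub_self, zero_div]

lemma norm_sq_sum_mul_fourierChar {ι : Type*} (I : Finset ι) (c : ι → ℂ) (k : ι → ℤ) (α : ℝ) :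
    ((‖∑ i ∈ I, c i * 𝐞 (k i * α)‖ ^ 2 : ℝ) : ℂ) =
      ∑ i ∈ I, ∑ j ∈ I, c i * conj (c j) * 𝐞 ((k i - k j : ℤ) * α) := by
  rw [Complex.ofReal_pow, ← Complex.mul_conj', map_sum, Finset.sum_mul_sum]
  refine Finset.sum_congr rfl fun i _ => Finset.sum_congr rfl fun j _ => ?_
  rw [(starRingEnd ℂ).map_mul, ← Circle.coe_inv_eq_conj, ← AddChar.map_neg_eq_inv,
    mul_mul_mul_comm, ← Circle.coe_mul, ← AddChar.map_add_eq_mul, Int.cast_sub, sub_mul,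
    sub_eq_add_neg]

lemma integral_sum_mul_fourierChar {ι : Type*} (I : Finset ι) (c : ι → ℂ) (k : ι → ℤ) (x : ℝ) :
    ∫ α in x..x + 1, ∑ i ∈ I, c i * (𝐞 (k i * α) : ℂ) = ∑ i ∈ I, if k i = 0 then c i else 0 := by
  rw [intervalIntegral.integral_finsetSum fun i _ =>
    ((continuous_fourierChar_mul (k i)).const_mul (c i)).intervalIntegrable _ _]
  simp only [intervalIntegral.integral_const_mul, integral_fourierChar, mul_ite, mul_one, mul_zero]

lemma integral_norm_sq_sum_mul_fourierChar {ι : Type*} (I : Finset ι) (c : ι → ℂ) (k : ι → ℤ)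
    (x : ℝ) :
    ∫ α in x..x + 1, ‖∑ i ∈ I, c i * 𝐞 (k i * α)‖ ^ 2 =
      ∑ i ∈ I, ∑ j ∈ I, if k i = k j then (c i * conj (c j)).re else 0 := by
  have h : ((∫ α in x..x + 1, ‖∑ i ∈ I, c i * 𝐞 (k i * α)‖ ^ 2 : ℝ) : ℂ) =
      ∑ i ∈ I, ∑ j ∈ I, if k i = k j then c i * conj (c j) else 0 := by
    rw [← intervalIntegral.integral_ofReal]
    simp only [norm_sq_sum_mul_fourierChar, ← Finset.sum_product']
    rw [integral_sum_mul_fourierChar (I ×ˢ I) (fun p => c p.1 * conj (c p.2))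
      fun p => k p.1 - k p.2]
    simp only [sub_eq_zero]
  rw [← Complex.ofReal_re (∫ α in x..x + 1, _), h]
  simp only [Complex.re_sum, apply_ite Complex.re, Complex.zero_re]

lemma integral_norm_sq_sum_mul_fourierChar_le {ι : Type*} (I : Finset ι) (c : ι → ℂ) (k : ι → ℤ)
    (x : ℝ) {K : ℕ} (hK : ∀ i ∈ I, #{j ∈ I | k j = k i} ≤ K) :
    ∫ α in x..x + 1, ‖∑ i ∈ I, c i * 𝐞 (k i * α)‖ ^ 2 ≤ K * ∑ i ∈ I, ‖c i‖ ^ 2 := by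
  have hre : ∀ i j, (c i * conj (c j)).re ≤ ‖c i‖ ^ 2 / 2 + ‖c j‖ ^ 2 / 2 := fun i j => by
    have h := Complex.re_le_norm (c i * conj (c j))
    rw [norm_mul, RCLike.norm_conj] at h
    linarith [two_mul_le_add_sq ‖c i‖ ‖c j‖]
  have hrow : ∑ i ∈ I, ∑ j ∈ I, (if k i = k j then ‖c i‖ ^ 2 / 2 else 0) ≤
      K * ((∑ i ∈ I, ‖c i‖ ^ 2) / 2) := by
    rw [Finset.sum_div, Finset.mul_sum]
    refine Finset.sum_le_sum fun i hi => ?_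
    rw [← Finset.sum_filter, Finset.sum_const, nsmul_eq_mul]
    simp only [eq_comm (a := k i)]
    gcongr
    exact hK i hi
  have hcol : ∑ i ∈ I, ∑ j ∈ I, (if k i = k j then ‖c j‖ ^ 2 / 2 else 0) ≤
      K * ((∑ i ∈ I, ‖c i‖ ^ 2) / 2) := by
    rw [Finset.sum_comm]
    simpa only [eq_comm] using hrow
  rw [integral_norm_sq_sum_mul_fourierChar]
  calc ∑ i ∈ I, ∑ j ∈ I, (if k i = k j then (c i * conj (c j)).re else 0)
      ≤ ∑ i ∈ I, ∑ j ∈ I, ((if k i = k j then ‖c i‖ ^ 2 / 2 else 0) +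
          if k i = k j then ‖c j‖ ^ 2 / 2 else 0) := by
        refine Finset.sum_le_sum fun i _ => Finset.sum_le_sum fun j _ => ?_
        split_ifs
        · exact hre i j
        · simp
    _ ≤ K * ∑ i ∈ I, ‖c i‖ ^ 2 := by
        simp only [Finset.sum_add_distrib]
        linarith

lemma integral_norm_sq_sum_mul_fourierChar_of_injOn {ι : Type*} (I : Finset ι) (c : ι → ℂ)
    {k : ι → ℤ} (hk : Set.InjOn k I) (x : ℝ) :
    ∫ α in x..x + 1, ‖∑ i ∈ I, c i * 𝐞 (k i * α)‖ ^ 2 = ∑ i ∈ I, ‖c i‖ ^ 2 := by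
  classical
  rw [integral_norm_sq_sum_mul_fourierChar]
  refine Finset.sum_congr rfl fun i hi => ?_
  rw [Finset.sum_eq_single_of_mem i hi fun j hj hji => if_neg fun h => hji (hk hj hi h.symm),
    if_pos rfl, Complex.mul_conj', ← Complex.ofReal_pow, Complex.ofReal_re]

end Characters

section ExpSum

/-- The exponential sum `∑ n ∈ A, exp (2 π i n α)` with frequencies in `A`. -/
noncomputable def expSum (A : Finset ℤ) (α : ℝ) : ℂ := ∑ n ∈ A, (𝐞 (n * α) : ℂ)

lemma continuous_expSum (A : Finset ℤ) : Continuous (expSum A) :=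
  continuous_finsetSum _ fun n _ => continuous_fourierChar_mul n

lemma norm_expSum_le (A : Finset ℤ) (α : ℝ) : ‖expSum A α‖ ≤ #A := by
  refine (norm_sum_le _ _).trans ?_
  simp only [Circle.norm_coe, Finset.sum_const, nsmul_eq_mul, mul_one, le_refl]

lemma integral_norm_expSum_sq (A : Finset ℤ) (x : ℝ) :
    ∫ α in x..x + 1, ‖expSum A α‖ ^ 2 = #A := by
  simpa [expSum] using
    integral_norm_sq_sum_mul_fourierChar_of_injOn A (fun _ => 1) (k := id) (fun _ _ _ _ h => h) x

lemma norm_expSum_sq (A : Finset ℤ) (α : ℝ) :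
    ((‖expSum A α‖ ^ 2 : ℝ) : ℂ) = ∑ p ∈ A ×ˢ A, (𝐞 ((p.1 - p.2 : ℤ) * α) : ℂ) := by
  simpa [expSum, Finset.sum_product] using norm_sq_sum_mul_fourierChar A (fun _ => 1) (fun n => n) α

lemma integral_norm_expSum_pow_four (A : Finset ℤ) (x : ℝ) :
    ∫ α in x..x + 1, ‖expSum A α‖ ^ 4 = E[A] := by
  have hsq : ∀ α : ℝ, ‖∑ p ∈ A ×ˢ A, 1 * (𝐞 ((p.1 - p.2 : ℤ) * α) : ℂ)‖ ^ 2 = ‖expSum A α‖ ^ 4 :=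
    fun α => by
      simp only [one_mul]
      rw [← norm_expSum_sq, Complex.norm_real, Real.norm_of_nonneg (by positivity), ← pow_mul]
  have h := integral_norm_sq_sum_mul_fourierChar (A ×ˢ A) (fun _ => 1) (fun p => p.1 - p.2) x
  simp only [hsq, map_one, mul_one, Complex.one_re] at h
  rw [h, ← Finset.sum_product', Finset.sum_boole, Finset.addEnergy, Nat.cast_inj]
  refine Finset.card_equiv ((Equiv.refl _).prodCongr (Equiv.prodComm ℤ ℤ)) ?_
  rintro ⟨⟨a, b⟩, c, d⟩
  simp only [Finset.mem_filter, Finset.mem_product, Equiv.prodCongr_apply, Equiv.refl_apply,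
    Prod.map_apply, Equiv.prodComm_apply, Prod.swap_prod_mk, and_comm (a := c ∈ A),
    sub_eq_sub_iff_add_eq_add, add_comm c b]

end ExpSum

section TrigPoly

/-- `f` is a real-valued trigonometric polynomial with frequencies in `[-Q, Q]`. -/
def IsTrigPoly (Q : ℕ) (f : ℝ → ℝ) : Prop :=
  ∃ c : ℤ → ℂ, ∀ α, (f α : ℂ) = ∑ n ∈ Finset.Icc (-(Q : ℤ)) Q, c n * 𝐞 (n * α)

namespace IsTrigPoly

variable {Q R : ℕ} {f g : ℝ → ℝ}

lemma of_sum {ι : Type*} (I : Finset ι) (c : ι → ℂ) (k : ι → ℤ) (hk : ∀ i ∈ I, |k i| ≤ Q)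
    (hf : ∀ α, (f α : ℂ) = ∑ i ∈ I, c i * 𝐞 (k i * α)) : IsTrigPoly Q f := by
  refine ⟨fun n => ∑ i ∈ I with k i = n, c i, fun α => ?_⟩
  have hmaps : ∀ i ∈ I, k i ∈ Finset.Icc (-(Q : ℤ)) Q := fun i hi =>
    Finset.mem_Icc.2 (abs_le.1 (hk i hi))
  rw [hf, ← Finset.sum_fiberwise_of_maps_to hmaps]
  refine Finset.sum_congr rfl fun n _ => ?_
  rw [Finset.sum_mul]
  exact Finset.sum_congr rfl fun i hi => by rw [(Finset.mem_filter.1 hi).2]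

lemma const (r : ℝ) (Q : ℕ) : IsTrigPoly Q fun _ => r :=
  of_sum {()} (fun _ => r) (fun _ => 0) (by simp) (by simp)

lemma mul (hf : IsTrigPoly Q f) (hg : IsTrigPoly R g) :
    IsTrigPoly (Q + R) fun α => f α * g α := by
  obtain ⟨c, hc⟩ := hf
  obtain ⟨d, hd⟩ := hg
  refine of_sum (Finset.Icc (-(Q : ℤ)) Q ×ˢ Finset.Icc (-(R : ℤ)) R) (fun p => c p.1 * d p.2)
    (fun p => p.1 + p.2) (fun p hp => ?_) fun α => ?_
  · simp only [Finset.mem_product, Finset.mem_Icc, ← abs_le] at hp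
    push_cast
    exact (abs_add_le _ _).trans (add_le_add hp.1 hp.2)
  · rw [Complex.ofReal_mul, hc, hd, Finset.sum_mul_sum, Finset.sum_product]
    refine Finset.sum_congr rfl fun n _ => Finset.sum_congr rfl fun m _ => ?_
    rw [Int.cast_add, add_mul, AddChar.map_add_eq_mul, Circle.coe_mul, mul_mul_mul_comm]

lemma one_sub (hf : IsTrigPoly Q f) : IsTrigPoly Q fun α => 1 - f α := by
  obtain ⟨c, hc⟩ := hf
  refine ⟨fun n => (if n = 0 then 1 else 0) - c n, fun α => ?_⟩
  simp [sub_mul, ← hc]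

lemma pow (hf : IsTrigPoly Q f) (k : ℕ) : IsTrigPoly (Q * k) fun α => f α ^ k := by
  induction k with
  | zero => simpa using const 1 0
  | succ k ih => simpa only [pow_succ, Nat.mul_succ] using ih.mul hf

lemma continuous (hf : IsTrigPoly Q f) : Continuous f := by
  obtain ⟨c, hc⟩ := hf
  have hre : f = fun α => (∑ n ∈ Finset.Icc (-(Q : ℤ)) Q, c n * 𝐞 (n * α)).re := by
    funext α
    rw [← hc, Complex.ofReal_re]
  rw [hre]
  exact Complex.continuous_re.comp
    (continuous_finsetSum _ fun n _ => (continuous_fourierChar_mul n).const_mul (c n))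

end IsTrigPoly

lemma isTrigPoly_norm_expSum_sq_div {A : Finset ℤ} {Q : ℕ} (hA : ∀ n ∈ A, 0 ≤ n ∧ n ≤ Q) (s : ℝ) :
    IsTrigPoly Q fun α => ‖expSum A α‖ ^ 2 / s := by
  refine .of_sum (A ×ˢ A) (fun _ => (s : ℂ)⁻¹) (fun p => p.1 - p.2) (fun p hp => ?_) fun α => ?_
  · obtain ⟨h1, h2⟩ := Finset.mem_product.1 hp
    exact abs_sub_le_of_nonneg_of_le (hA _ h1).1 (hA _ h1).2 (hA _ h2).1 (hA _ h2).2
  · rw [← Finset.mul_sum, ← norm_expSum_sq, Complex.ofReal_div, div_eq_inv_mul]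

end TrigPoly

section Dilates

lemma card_filter_dvd_le_log {P : Finset ℕ} (hP : ∀ p ∈ P, p.Prime) {n M : ℕ} (hn : n ≠ 0)
    (hM : n ≤ M) : #{p ∈ P | p ∣ n} ≤ Nat.log 2 M := by
  have hdvd : ∏ p ∈ P with p ∣ n, p ∣ n :=
    Finset.prod_primes_dvd n (fun p hp => (hP p (Finset.mem_filter.1 hp).1).prime)
      fun p hp => (Finset.mem_filter.1 hp).2
  have hpow : 2 ^ #{p ∈ P | p ∣ n} ≤ ∏ p ∈ P with p ∣ n, p :=
    Finset.pow_card_le_prod _ _ _ fun p hp => (hP p (Finset.mem_filter.1 hp).1).two_le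
  exact Nat.le_log_of_pow_le one_lt_two
    ((hpow.trans (Nat.le_of_dvd (Nat.pos_of_ne_zero hn) hdvd)).trans hM)

lemma card_filter_prime_mul_eq_le_log {P : Finset ℕ} {H Q : ℕ} (hP : ∀ p ∈ P, p.Prime ∧ p ≤ H)
    (J : Finset ℤ) {p : ℕ} (hp : p ∈ P) {n : ℤ} (hn : n ≠ 0) (hnQ : |n| ≤ Q) :
    #{q ∈ P ×ˢ J | (q.1 * q.2 : ℤ) = p * n} ≤ Nat.log 2 (H * Q) := by
  have hmaps : ∀ q ∈ ({q ∈ P ×ˢ J | (q.1 * q.2 : ℤ) = p * n} : Finset (ℕ × ℤ)),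
      q.1 ∈ ({p' ∈ P | p' ∣ p * n.natAbs} : Finset ℕ) := by
    rintro ⟨p', n'⟩ hq
    obtain ⟨hq, heq⟩ := Finset.mem_filter.1 hq
    have habs := congrArg Int.natAbs heq
    simp only [Int.natAbs_mul, Int.natAbs_natCast] at habs
    exact Finset.mem_filter.2 ⟨(Finset.mem_product.1 hq).1, _, habs.symm⟩
  have hinj : Set.InjOn Prod.fst
      (({q ∈ P ×ˢ J | (q.1 * q.2 : ℤ) = p * n} : Finset (ℕ × ℤ)) : Set (ℕ × ℤ)) := by
    rintro ⟨p', n'⟩ hq' ⟨p'', n''⟩ hq'' (rfl : p' = p'')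
    obtain ⟨hq', heq'⟩ := Finset.mem_filter.1 hq'
    have hp' := (hP p' (Finset.mem_product.1 hq').1).1.ne_zero
    exact Prod.ext rfl (mul_left_cancel₀ (Int.natCast_ne_zero.2 hp')
      (heq'.trans (Finset.mem_filter.1 hq'').2.symm))
  have hnQ' : n.natAbs ≤ Q := by rwa [Int.abs_eq_natAbs, Int.ofNat_le] at hnQ
  have hne : p * n.natAbs ≠ 0 := mul_ne_zero (hP p hp).1.ne_zero (Int.natAbs_ne_zero.2 hn)
  exact (Finset.card_le_card_of_injOn _ hmaps hinj).trans
    (card_filter_dvd_le_log (fun p hp => (hP p hp).1) hne (Nat.mul_le_mul (hP p hp).2 hnQ'))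

variable {Q : ℕ} {f : ℝ → ℝ} {c : ℤ → ℂ}
  (hc : ∀ α, (f α : ℂ) = ∑ n ∈ Finset.Icc (-(Q : ℤ)) Q, c n * 𝐞 (n * α)) (x : ℝ)

include hc

lemma integral_eq_coeff_zero : ((∫ β in x..x + 1, f β : ℝ) : ℂ) = c 0 := by
  rw [← intervalIntegral.integral_ofReal]
  simp [hc, integral_sum_mul_fourierChar _ c fun n => n]

lemma integral_sq_eq_sum_norm_coeff_sq :
    ∫ β in x..x + 1, f β ^ 2 = ∑ n ∈ Finset.Icc (-(Q : ℤ)) Q, ‖c n‖ ^ 2 := by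
  rw [← integral_norm_sq_sum_mul_fourierChar_of_injOn _ c (k := id) Function.injective_id.injOn x]
  simp only [id, ← hc, Complex.norm_real, Real.norm_eq_abs, sq_abs]

lemma sum_dilates_sub_eq_sum_fourierChar (P : Finset ℕ) (α : ℝ) :
    ((∑ p ∈ P, f (p * α) - #P * ∫ β in x..x + 1, f β : ℝ) : ℂ) =
      ∑ q ∈ P ×ˢ (Finset.Icc (-(Q : ℤ)) Q).erase 0, c q.2 * 𝐞 ((q.1 * q.2 : ℤ) * α) := by
  have h0 : (0 : ℤ) ∈ Finset.Icc (-(Q : ℤ)) Q := by simp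
  push_cast
  rw [integral_eq_coeff_zero hc, Finset.sum_product, ← nsmul_eq_mul, ← Finset.sum_const,
    ← Finset.sum_sub_distrib]
  refine Finset.sum_congr rfl fun p _ => ?_
  rw [hc, ← Finset.add_sum_erase _ _ h0, Int.cast_zero, zero_mul, AddChar.map_zero_eq_one,
    Circle.coe_one, mul_one, add_sub_cancel_left]
  refine Finset.sum_congr rfl fun n _ => ?_
  rw [mul_left_comm, mul_assoc]

omit hc

lemma IsTrigPoly.integral_sq_sum_dilates_sub_le (hf : IsTrigPoly Q f) {P : Finset ℕ} {H : ℕ}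
    (hP : ∀ p ∈ P, p.Prime ∧ p ≤ H) :
    ∫ α in x..x + 1, (∑ p ∈ P, f (p * α) - #P * ∫ β in x..x + 1, f β) ^ 2 ≤
      Nat.log 2 (H * Q) * (#P * ∫ β in x..x + 1, f β ^ 2) := by
  obtain ⟨c, hc⟩ := hf
  have hnorm : ∀ α, (∑ p ∈ P, f (p * α) - #P * ∫ β in x..x + 1, f β) ^ 2 =
      ‖∑ q ∈ P ×ˢ (Finset.Icc (-(Q : ℤ)) Q).erase 0, c q.2 * 𝐞 ((q.1 * q.2 : ℤ) * α)‖ ^ 2 :=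
    fun α => by
      rw [← sum_dilates_sub_eq_sum_fourierChar hc, Complex.norm_real, Real.norm_eq_abs, sq_abs]
  simp only [hnorm]
  refine (integral_norm_sq_sum_mul_fourierChar_le (K := Nat.log 2 (H * Q)) _ _ _ _ ?_).trans ?_
  · rintro ⟨p, n⟩ hq
    simp only [Finset.mem_product, Finset.mem_erase, Finset.mem_Icc, ← abs_le] at hq
    exact card_filter_prime_mul_eq_le_log hP _ hq.1 hq.2.1 hq.2.2
  · rw [integral_sq_eq_sum_norm_coeff_sq hc, Finset.sum_product]
    simp only [Finset.sum_const, nsmul_eq_mul]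
    gcongr
    exact Finset.erase_subset _ _

lemma IsTrigPoly.measureReal_forall_dilate_lt_le (hf : IsTrigPoly Q f) (h0 : ∀ α, 0 ≤ f α)
    (h1 : ∀ α, f α ≤ 1) (hpos : 0 < ∫ β in x..x + 1, f β) {P : Finset ℕ} {H : ℕ}
    (hP : ∀ p ∈ P, p.Prime ∧ p ≤ H) (hPne : P.Nonempty) :
    volume.real {α ∈ Set.Ioc x (x + 1) | ∀ p ∈ P, f (p * α) < (∫ β in x..x + 1, f β) / 2} ≤
      4 * Nat.log 2 (H * Q) / (#P * ∫ β in x..x + 1, f β) := by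
  set m := ∫ β in x..x + 1, f β
  have hPm : 0 < #P * m := mul_pos (Nat.cast_pos.2 hPne.card_pos) hpos
  let g : ℝ → ℝ := fun α => (∑ p ∈ P, f (p * α) - #P * m) ^ 2
  have hg : Continuous g := by
    have := hf.continuous
    fun_prop
  have hvar : ∫ α in Set.Ioc x (x + 1), g α ≤ Nat.log 2 (H * Q) * (#P * m) := by
    have hsq : ∫ β in x..x + 1, f β ^ 2 ≤ m :=
      intervalIntegral.integral_mono_on (by linarith)
        ((hf.continuous.pow 2).intervalIntegrable _ _) (hf.continuous.intervalIntegrable _ _)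
        fun α _ => pow_le_of_le_one (h0 α) (h1 α) two_ne_zero
    rw [← intervalIntegral.integral_of_le (by linarith)]
    refine (hf.integral_sq_sum_dilates_sub_le x hP).trans ?_
    gcongr
  have hmarkov := mul_meas_ge_le_integral_of_nonneg (μ := volume.restrict (Set.Ioc x (x + 1)))
    (ae_of_all _ fun α => sq_nonneg (∑ p ∈ P, f (p * α) - #P * m)) hg.integrableOn_Ioc
    ((#P * m / 2) ^ 2)
  have hsub : {α ∈ Set.Ioc x (x + 1) | ∀ p ∈ P, f (p * α) < m / 2} ⊆
      {α | (#P * m / 2) ^ 2 ≤ g α} ∩ Set.Ioc x (x + 1) := by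
    rintro α ⟨hα, hlt⟩
    have hsum : ∑ p ∈ P, f (p * α) ≤ #P * (m / 2) := by
      simpa using Finset.sum_le_sum fun p hp => (hlt p hp).le
    have hdev : #P * m / 2 ≤ #P * m - ∑ p ∈ P, f (p * α) := by linarith
    exact ⟨(pow_le_pow_left₀ (half_pos hPm).le hdev 2).trans_eq (sub_sq_comm _ _), hα⟩
  have hle : volume.real {α ∈ Set.Ioc x (x + 1) | ∀ p ∈ P, f (p * α) < m / 2} ≤
      (volume.restrict (Set.Ioc x (x + 1))).real {α | (#P * m / 2) ^ 2 ≤ g α} := by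
    rw [measureReal_restrict_apply (measurableSet_le measurable_const hg.measurable)]
    exact measureReal_mono hsub (measure_inter_lt_top_of_right_ne_top (by simp)).ne
  rw [le_div_iff₀ hPm]
  refine le_of_mul_le_mul_left ?_ hPm
  linarith [(mul_le_mul_of_nonneg_left hle (sq_nonneg _)).trans (hmarkov.trans hvar)]

end Dilates

/-! ### Koksma's inequality and the large spectrum -/

section Koksma

lemma starDisc_nonneg (N : ℕ) (x : ℕ → ℝ) : 0 ≤ starDisc N x :=
  Real.iSup_nonneg fun _ => abs_nonneg _

lemma abs_card_sub_mul_le_mul_starDisc (N : ℕ) (x : ℕ → ℝ) {β : ℝ} (hβ : β ∈ Set.Ioc (0 : ℝ) 1) :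
    |(#{n ∈ Finset.Icc 1 N | 0 ≤ x n ∧ x n < β} : ℝ) - N * β| ≤ N * starDisc N x := by
  rcases N.eq_zero_or_pos with rfl | hN
  · simp
  have hN' : (0 : ℝ) < N := Nat.cast_pos.2 hN
  have hbdd : BddAbove (Set.range fun β : Set.Ioc (0 : ℝ) 1 =>
      |(#{n ∈ Finset.Icc 1 N | 0 ≤ x n ∧ x n < (β : ℝ)} : ℝ) / N - (β : ℝ)|) := by
    refine ⟨1, Set.forall_mem_range.2 fun β => abs_sub_le_of_nonneg_of_le (by positivity) ?_
      β.2.1.le β.2.2⟩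
    refine (div_le_one hN').2 (Nat.cast_le.2 ((Finset.card_filter_le _ _).trans ?_))
    simp
  calc |(#{n ∈ Finset.Icc 1 N | 0 ≤ x n ∧ x n < β} : ℝ) - N * β|
      = N * |(#{n ∈ Finset.Icc 1 N | 0 ≤ x n ∧ x n < β} : ℝ) / N - β| := by
        conv_rhs => lhs; rw [← Nat.abs_cast]
        rw [← abs_mul, mul_sub, mul_div_cancel₀ _ hN'.ne']
    _ ≤ N * starDisc N x := mul_le_mul_of_nonneg_left (le_ciSup hbdd ⟨β, hβ⟩) hN'.le

variable {E : Type*} [NormedAddCommGroup E] [NormedSpace ℝ E] [CompleteSpace E] {φ φ' : ℝ → E}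
  (hφ : ∀ β, HasDerivAt φ (φ' β) β) (hφ' : Continuous φ')

include hφ hφ'

lemma eq_add_integral_indicator_deriv {t : ℝ} (ht : t ∈ Set.Icc (0 : ℝ) 1) :
    φ t = φ 0 + ∫ β in (0 : ℝ)..1, {β | β ≤ t}.indicator φ' β := by
  rw [intervalIntegral.integral_indicator ht, intervalIntegral.integral_eq_sub_of_hasDerivAt
    (fun β _ => hφ β) (hφ'.intervalIntegrable _ _), add_sub_cancel]

lemma integral_eq_add_integral_one_sub_smul_deriv :
    ∫ β in (0 : ℝ)..1, φ β = φ 0 + ∫ β in (0 : ℝ)..1, (1 - β) • φ' β := by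
  rw [intervalIntegral.integral_smul_deriv_eq_deriv_smul (u := fun β => 1 - β) (u' := fun _ => -1)
    (fun β _ => (hasDerivAt_id' β).const_sub 1) (fun β _ => hφ β) (by simp)
    (hφ'.intervalIntegrable _ _)]
  simp

lemma sum_sub_smul_integral_eq_integral {N : ℕ} {x : ℕ → ℝ} (hx : ∀ n, x n ∈ Set.Ico (0 : ℝ) 1) :
    ∑ n ∈ Finset.Icc 1 N, φ (x n) - (N : ℝ) • ∫ β in (0 : ℝ)..1, φ β =
      ∫ β in (0 : ℝ)..1, (N * β - #{n ∈ Finset.Icc 1 N | 0 ≤ x n ∧ x n < β} : ℝ) • φ' β := by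
  have hind : ∀ n, IntervalIntegrable ({β | β ≤ x n}.indicator φ') volume 0 1 := fun n =>
    (intervalIntegrable_iff.1 (hφ'.intervalIntegrable 0 1)).indicator measurableSet_Iic
      |> intervalIntegrable_iff.2
  have hsum : ∀ β, ∑ n ∈ Finset.Icc 1 N, {β | β ≤ x n}.indicator φ' β =
      (N - #{n ∈ Finset.Icc 1 N | 0 ≤ x n ∧ x n < β} : ℝ) • φ' β := fun β => by
    have hcard := Finset.card_filter_add_card_filter_not (s := Finset.Icc 1 N) fun n => x n < β
    rw [Nat.card_Icc, Nat.add_sub_cancel] at hcard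
    simp only [(hx _).1, true_and, Set.indicator_apply, Set.mem_ofPred_eq, ← Finset.sum_filter,
      Finset.sum_const, ← Nat.cast_smul_eq_nsmul ℝ, ← not_lt]
    congr 1
    rw [eq_sub_iff_add_eq']
    exact_mod_cast hcard
  simp only [eq_add_integral_indicator_deriv hφ hφ' ⟨(hx _).1, (hx _).2.le⟩,
    integral_eq_add_integral_one_sub_smul_deriv hφ hφ']
  rw [Finset.sum_add_distrib, ← intervalIntegral.integral_finsetSum fun n _ => hind n,
    Finset.sum_const, Nat.card_Icc, Nat.add_sub_cancel, ← Nat.cast_smul_eq_nsmul ℝ, smul_add,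
    add_sub_add_left_eq_sub, ← intervalIntegral.integral_smul, ← intervalIntegral.integral_sub]
  · simp only [hsum, smul_smul, ← sub_smul]
    congr! 3
    ring
  · simpa only [Finset.sum_fn] using IntervalIntegrable.sum (Finset.Icc 1 N) fun n _ => hind n
  · exact Continuous.intervalIntegrable (by fun_prop) _ _

lemma norm_sum_sub_smul_integral_le_mul_starDisc {N : ℕ} {x : ℕ → ℝ}
    (hx : ∀ n, x n ∈ Set.Ico (0 : ℝ) 1) :
    ‖∑ n ∈ Finset.Icc 1 N, φ (x n) - (N : ℝ) • ∫ β in (0 : ℝ)..1, φ β‖ ≤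
      N * starDisc N x * ∫ β in (0 : ℝ)..1, ‖φ' β‖ := by
  rw [sum_sub_smul_integral_eq_integral hφ hφ' hx, ← intervalIntegral.integral_const_mul]
  refine intervalIntegral.norm_integral_le_of_norm_le zero_le_one (ae_of_all _ fun β hβ => ?_)
    (hφ'.norm.const_mul _ |>.intervalIntegrable _ _)
  rw [norm_smul, Real.norm_eq_abs, abs_sub_comm]
  exact mul_le_mul_of_nonneg_right (abs_card_sub_mul_le_mul_starDisc N x hβ) (norm_nonneg _)

omit hφ hφ'

lemma norm_sum_fourierChar_le_mul_starDisc {N p : ℕ} (hp : p ≠ 0) {x : ℕ → ℝ}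
    (hx : ∀ n, x n ∈ Set.Ico (0 : ℝ) 1) :
    ‖∑ n ∈ Finset.Icc 1 N, (𝐞 (p * x n) : ℂ)‖ ≤ 2 * Real.pi * p * (N * starDisc N x) := by
  have hderiv : ∀ β : ℝ, HasDerivAt (fun β : ℝ => (𝐞 (p * β) : ℂ))
      ((p : ℝ) • (2 * Real.pi * Complex.I * 𝐞 (p * β))) β := fun β =>
    (Real.hasDerivAt_fourierChar (p * β)).scomp β (hasDerivAt_const_mul (p : ℝ))
  have hint := integral_fourierChar p 0
  rw [zero_add, if_neg (Int.natCast_ne_zero.2 hp), Int.cast_natCast] at hint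
  have hnorm : ∀ β : ℝ,
      ‖(p : ℝ) • (2 * Real.pi * Complex.I * (𝐞 (p * β) : ℂ))‖ = 2 * Real.pi * p := fun β => by
    simp only [norm_smul, norm_mul, Circle.norm_coe, Complex.norm_I, Complex.norm_real,
      Complex.norm_ofNat, Real.norm_natCast, Real.norm_of_nonneg Real.pi_pos.le]
    ring
  have h := norm_sum_sub_smul_integral_le_mul_starDisc hderiv
    (((continuous_fourierChar_mul p).const_mul _).const_smul (p : ℝ)) (N := N) hx
  simp only [hnorm] at h
  rw [hint, smul_zero, sub_zero] at h
  simpa [mul_comm (N * starDisc N x : ℝ)] using h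

lemma fourierChar_natCast_mul_fract (p : ℕ) (t : ℝ) : 𝐞 (p * Int.fract t) = 𝐞 (p * t) := by
  rw [Int.fract, mul_sub, AddChar.map_sub_eq_div]
  have h := fourierChar_intCast (p * ⌊t⌋)
  push_cast at h
  rw [h, div_one]

end Koksma

section LargeSpectrum

variable (A : Finset ℤ) (x : ℝ)

/-- The large spectrum of `A` at height `l`: the frequencies at which the exponential sum over `A`
has absolute value at least `l`. Only one period `(x, x + 1]` is retained, so that its Lebesgue
measure is the measure of the spectrum on the circle. -/
def largeSpectrum (l : ℝ) : Set ℝ := {α ∈ Set.Ioc x (x + 1) | l ≤ ‖expSum A α‖}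

lemma measurableSet_largeSpectrum (l : ℝ) : MeasurableSet (largeSpectrum A x l) :=
  measurableSet_Ioc.inter
    (measurableSet_le measurable_const (continuous_expSum A).norm.measurable)

lemma volume_sep_Ioc_ne_top (p : ℝ → Prop) : volume {α ∈ Set.Ioc x (x + 1) | p α} ≠ ⊤ :=
  measure_ne_top_of_subset (Set.sep_subset _ _) measure_Ioc_lt_top.ne

lemma measureReal_largeSpectrum_le_one (l : ℝ) : volume.real (largeSpectrum A x l) ≤ 1 :=
  (measureReal_mono (Set.sep_subset _ _) measure_Ioc_lt_top.ne).trans (by simp)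

variable {A}

lemma mul_measureReal_largeSpectrum_le_integral {f : ℝ → ℝ} (hf : Continuous f) (h0 : ∀ α, 0 ≤ f α)
    {c l : ℝ} (hc : ∀ α, l ≤ ‖expSum A α‖ → c ≤ f α) :
    c * volume.real (largeSpectrum A x l) ≤ ∫ α in x..x + 1, f α := by
  have hint : IntegrableOn f (Set.Ioc x (x + 1)) := hf.integrableOn_Ioc
  rw [intervalIntegral.integral_of_le (le_add_of_nonneg_right zero_le_one)]
  exact (setIntegral_ge_of_const_le_real (measurableSet_largeSpectrum A x l)
    (volume_sep_Ioc_ne_top x _) (fun α hα => hc α hα.2) (hint.mono_set (Set.sep_subset _ _))).trans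
    (setIntegral_mono_set hint (ae_of_all _ h0) (Set.sep_subset _ _).eventuallyLE)

lemma sq_le_one_add_sum_four_pow {s : ℝ} (hs : 0 ≤ s) :
    ∀ {L : ℕ}, s < 2 ^ L → s ^ 2 ≤ 1 + ∑ j ∈ Finset.range L, if 2 ^ j ≤ s then 4 ^ (j + 1) else 0
  | 0, hL => by
    rw [Finset.sum_range_zero, add_zero]
    exact pow_le_one₀ hs (by simpa using hL.le)
  | L + 1, hL => by
    rw [Finset.sum_range_succ]
    by_cases h : 2 ^ L ≤ s
    · have hs2 : s ^ 2 ≤ (2 ^ (L + 1)) ^ 2 := pow_le_pow_left₀ hs hL.le 2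
      rw [pow_right_comm, show (2 : ℝ) ^ 2 = 4 by norm_num] at hs2
      rw [if_pos h, ← add_assoc]
      exact hs2.trans (le_add_of_nonneg_left (by positivity))
    · rw [if_neg h, add_zero]
      exact sq_le_one_add_sum_four_pow hs (not_le.1 h)

lemma card_le_one_add_sum_measureReal_largeSpectrum {L : ℕ} (hL : #A < 2 ^ L) :
    (#A : ℝ) ≤ 1 + ∑ j ∈ Finset.range L, volume.real (largeSpectrum A x (2 ^ j)) * 4 ^ (j + 1) := by
  have hx : x ≤ x + 1 := le_add_of_nonneg_right zero_le_one
  have hint : ∀ j : ℕ, IntervalIntegrable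
      ((largeSpectrum A x (2 ^ j)).indicator fun _ => (4 : ℝ) ^ (j + 1)) volume x (x + 1) :=
    fun j => (intervalIntegrable_iff_integrableOn_Ioc_of_le hx).2
      ((integrableOn_const measure_Ioc_lt_top.ne).indicator (measurableSet_largeSpectrum A x _))
  have hsum : IntervalIntegrable (fun α => ∑ j ∈ Finset.range L,
      (largeSpectrum A x (2 ^ j)).indicator (fun _ => (4 : ℝ) ^ (j + 1)) α) volume x (x + 1) := by
    simpa only [Finset.sum_fn] using IntervalIntegrable.sum (Finset.range L) fun j _ => hint j
  calc (#A : ℝ) = ∫ α in x..x + 1, ‖expSum A α‖ ^ 2 := (integral_norm_expSum_sq A x).symm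
    _ ≤ ∫ α in x..x + 1, (1 + ∑ j ∈ Finset.range L,
          (largeSpectrum A x (2 ^ j)).indicator (fun _ => 4 ^ (j + 1)) α) := by
        refine intervalIntegral.integral_mono_on_of_le_Ioo hx
          (((continuous_expSum A).norm.pow 2).intervalIntegrable _ _)
          (intervalIntegrable_const.add hsum) fun α hα => ?_
        simpa only [Set.indicator_apply, largeSpectrum, Set.mem_ofPred_eq,
          Set.Ioo_subset_Ioc_self hα, true_and] using
          sq_le_one_add_sum_four_pow (norm_nonneg _)
            ((norm_expSum_le A α).trans_lt (mod_cast hL : (#A : ℝ) < 2 ^ L))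
    _ = _ := by
        rw [intervalIntegral.integral_add intervalIntegrable_const hsum,
          intervalIntegral.integral_finsetSum fun j _ => hint j]
        simp only [intervalIntegral.integral_of_le hx,
          integral_indicator_const _ (measurableSet_largeSpectrum A x _), smul_eq_mul]
        congr! 3 with j
        · simp
        · rw [measureReal_restrict_apply (measurableSet_largeSpectrum A x _),
            Set.inter_eq_left.2 fun α hα => hα.1]

lemma exists_card_le_mul_measureReal_largeSpectrum (hA : 2 ≤ #A) {L : ℕ} (hL : #A < 2 ^ L) :
    ∃ j < L, (#A : ℝ) ≤ 8 * L * (4 ^ j * volume.real (largeSpectrum A x (2 ^ j))) := by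
  have hL0 : L ≠ 0 := by
    rintro rfl
    rw [pow_zero] at hL
    omega
  have hA' : (2 : ℝ) ≤ #A := mod_cast hA
  have hsum := card_le_one_add_sum_measureReal_largeSpectrum x hL
  obtain ⟨j, hj, hle⟩ := Finset.exists_le_of_sum_le (s := Finset.range L)
    (f := fun _ => (#A : ℝ) / (2 * L))
    (g := fun j => volume.real (largeSpectrum A x (2 ^ j)) * 4 ^ (j + 1))
    (Finset.nonempty_range_iff.2 hL0) (by
      rw [Finset.sum_const, Finset.card_range, nsmul_eq_mul, mul_div_left_comm,
        div_mul_cancel_right₀ (Nat.cast_ne_zero.2 hL0)]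
      linarith)
  refine ⟨j, Finset.mem_range.1 hj, ?_⟩
  rw [div_le_iff₀ (by positivity)] at hle
  linear_combination hle

lemma sixteen_pow_mul_measureReal_largeSpectrum_le_addEnergy (j : ℕ) :
    16 ^ j * volume.real (largeSpectrum A x (2 ^ j)) ≤ E[A] := by
  rw [← integral_norm_expSum_pow_four A x, show (16 : ℝ) = 2 ^ 4 by norm_num, pow_right_comm]
  exact mul_measureReal_largeSpectrum_le_integral x ((continuous_expSum A).norm.pow 4)
    (fun α => pow_nonneg (norm_nonneg _) 4) fun α hα => pow_le_pow_left₀ (by positivity) hα 4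

lemma exists_card_pow_three_le_addEnergy_mul_measureReal_largeSpectrum (hA : 2 ≤ #A) {L : ℕ}
    (hL : #A < 2 ^ L) :
    ∃ j < L, (#A : ℝ) ^ 3 ≤
      512 * L ^ 3 * E[A] * (2 ^ j * volume.real (largeSpectrum A x (2 ^ j))) ^ 2 := by
  obtain ⟨j, hj, hle⟩ := exists_card_le_mul_measureReal_largeSpectrum x hA hL
  refine ⟨j, hj, ?_⟩
  have hE := sixteen_pow_mul_measureReal_largeSpectrum_le_addEnergy (A := A) x j
  set g := volume.real (largeSpectrum A x (2 ^ j))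
  have h4 : (4 : ℝ) ^ j = (2 ^ j) ^ 2 := by rw [pow_right_comm]; norm_num
  have h16 : (16 : ℝ) ^ j = (2 ^ j) ^ 4 := by rw [pow_right_comm]; norm_num
  calc (#A : ℝ) ^ 3 ≤ (8 * L * (4 ^ j * g)) ^ 3 := by gcongr
    _ = 512 * L ^ 3 * (16 ^ j * g) * (2 ^ j * g) ^ 2 := by rw [h4, h16]; ring
    _ ≤ 512 * L ^ 3 * E[A] * (2 ^ j * g) ^ 2 := by gcongr

end LargeSpectrum

/-! ### Star-discrepancy of dilated sequences -/

section SpectrumDilates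

lemma one_sub_one_sub_pow_mem_Icc {y : ℝ} (hy : y ∈ Set.Icc (0 : ℝ) 1) (k : ℕ) :
    1 - (1 - y) ^ k ∈ Set.Icc (0 : ℝ) 1 := by
  have hy' := Set.Icc.one_sub_mem hy
  exact Set.Icc.one_sub_mem ⟨pow_nonneg hy'.1 k, pow_le_one₀ hy'.1 hy'.2⟩

lemma one_sub_one_sub_pow_le {y : ℝ} (hy : y ≤ 1) (k : ℕ) : 1 - (1 - y) ^ k ≤ k * y := by
  have h := one_add_mul_le_pow (a := -y) (by linarith) k
  rw [← sub_eq_add_neg] at h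
  linarith

lemma half_le_one_sub_one_sub_pow {y : ℝ} (hy : y ≤ 1) {k : ℕ} (hk : 1 ≤ k * y) :
    1 / 2 ≤ 1 - (1 - y) ^ k := by
  have hexp : Real.exp (-1) ≤ 1 / 2 := by
    rw [Real.exp_neg, inv_le_comm₀ (Real.exp_pos _) (by norm_num)]
    linarith [Real.add_one_le_exp 1]
  have hpow : (1 - y) ^ k ≤ Real.exp (-1) := calc
    (1 - y) ^ k ≤ Real.exp (-y) ^ k :=
      pow_le_pow_left₀ (sub_nonneg.2 hy) (Real.one_sub_le_exp_neg y) k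
    _ = Real.exp (-(k * y)) := by rw [← Real.exp_nat_mul, mul_neg]
    _ ≤ Real.exp (-1) := Real.exp_le_exp.2 (neg_le_neg hk)
  linarith

variable {A : Finset ℤ} {Q r k : ℕ} {l : ℝ}

lemma exists_isTrigPoly_approx_largeSpectrum (hA : ∀ n ∈ A, 0 ≤ n ∧ n ≤ Q) (hAne : A.Nonempty)
    (hl : 0 < l) (hk : (#A : ℝ) ^ (2 * r) = k * l ^ (2 * r)) :
    ∃ f : ℝ → ℝ, IsTrigPoly (Q * r * k) f ∧ (∀ α, f α ∈ Set.Icc (0 : ℝ) 1) ∧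
      (∀ α, f α ≤ (‖expSum A α‖ / l) ^ (2 * r)) ∧ ∀ α, l ≤ ‖expSum A α‖ → 1 / 2 ≤ f α := by
  set y : ℝ → ℝ := fun α => (‖expSum A α‖ ^ 2 / (#A : ℝ) ^ 2) ^ r
  have hA0 : (0 : ℝ) < #A := Nat.cast_pos.2 hAne.card_pos
  have hy : ∀ α, y α ∈ Set.Icc (0 : ℝ) 1 := fun α => by
    have hS := norm_expSum_le A α
    exact ⟨by positivity, pow_le_one₀ (by positivity) ((div_le_one (by positivity)).2 (by gcongr))⟩
  have hky : ∀ α, k * y α = (‖expSum A α‖ / l) ^ (2 * r) := fun α => by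
    have hkpos : (k : ℝ) ≠ 0 := left_ne_zero_of_mul (hk ▸ (pow_pos hA0 (2 * r)).ne')
    simp only [y]
    rw [← div_pow, ← pow_mul, div_pow, hk, div_pow]
    field_simp
  refine ⟨fun α => 1 - (1 - y α) ^ k,
    (((isTrigPoly_norm_expSum_sq_div hA _).pow r).one_sub.pow k).one_sub,
    fun α => one_sub_one_sub_pow_mem_Icc (hy α) k,
    fun α => hky α ▸ one_sub_one_sub_pow_le (hy α).2 k,
    fun α hα => half_le_one_sub_one_sub_pow (hy α).2 ?_⟩
  rw [hky]
  exact one_le_pow₀ ((one_le_div hl).2 hα)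

lemma measureReal_forall_dilate_expSum_lt_le (hA : ∀ n ∈ A, 0 ≤ n ∧ n ≤ Q) (hAne : A.Nonempty)
    (hl : 0 < l) (hk : (#A : ℝ) ^ (2 * r) = k * l ^ (2 * r)) {x : ℝ}
    (hg : 0 < volume.real (largeSpectrum A x l)) {H : ℕ} {P : Finset ℕ}
    (hP : ∀ p ∈ P, p.Prime ∧ p ≤ H) (hPne : P.Nonempty) :
    volume.real {α ∈ Set.Ioc x (x + 1) | ∀ p ∈ P, (‖expSum A (p * α)‖ / l) ^ (2 * r) <
        volume.real (largeSpectrum A x l) / 4} ≤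
      8 * Nat.log 2 (H * (Q * r * k)) / (#P * volume.real (largeSpectrum A x l)) := by
  obtain ⟨f, hf, hf01, hfle, hfge⟩ := exists_isTrigPoly_approx_largeSpectrum hA hAne hl hk
  set g := volume.real (largeSpectrum A x l)
  have hmean : 1 / 2 * g ≤ ∫ α in x..x + 1, f α :=
    mul_measureReal_largeSpectrum_le_integral x hf.continuous (fun α => (hf01 α).1) hfge
  calc _ ≤ volume.real {α ∈ Set.Ioc x (x + 1) | ∀ p ∈ P, f (p * α) <
        (∫ α in x..x + 1, f α) / 2} := by
        refine measureReal_mono ?_ (volume_sep_Ioc_ne_top x _)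
        exact fun α hα => ⟨hα.1, fun p hp => (hfle _).trans_lt ((hα.2 p hp).trans_le (by linarith))⟩
    _ ≤ 4 * Nat.log 2 (H * (Q * r * k)) / (#P * ∫ α in x..x + 1, f α) :=
        hf.measureReal_forall_dilate_lt_le x (fun α => (hf01 α).1) (fun α => (hf01 α).2)
          (by linarith) hP hPne
    _ ≤ 4 * Nat.log 2 (H * (Q * r * k)) / (#P * (1 / 2 * g)) := by gcongr
    _ = _ := by field_simp; ring

end SpectrumDilates

section StarDiscrepancy

/-- The first `N` terms `a 1, …, a N` of a sequence, as a set of integers; the shift by one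
matches the indexing of `starDisc`. -/
def initialTerms (a : ℕ → ℕ) (N : ℕ) : Finset ℤ :=
  (Finset.range N).image fun i => (a (i + 1) : ℤ)

variable {a : ℕ → ℕ} (ha : StrictMono fun i => (a (i + 1) : ℤ))

include ha

lemma card_initialTerms (N : ℕ) : #(initialTerms a N) = N := by
  rw [initialTerms, Finset.card_image_of_injective _ ha.injective, Finset.card_range]

lemma nonneg_and_le_of_mem_initialTerms {N : ℕ} {n : ℤ} (hn : n ∈ initialTerms a N) :
    0 ≤ n ∧ n ≤ a N := by
  obtain ⟨i, hi, rfl⟩ := Finset.mem_image.1 hn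
  have hiN := Finset.mem_range.1 hi
  have h := ha.monotone (Nat.le_sub_one_of_lt hiN)
  simp only [Nat.sub_add_cancel (Nat.one_le_of_lt hiN)] at h
  exact ⟨Int.natCast_nonneg _, h⟩

lemma expSum_initialTerms (N : ℕ) (α : ℝ) :
    expSum (initialTerms a N) α = ∑ n ∈ Finset.Icc 1 N, (𝐞 (a n * α) : ℂ) := by
  rw [expSum, initialTerms, Finset.sum_image ha.injective.injOn, Finset.range_eq_Ico,
    Finset.sum_Ico_add' (fun n => (𝐞 (((a n : ℤ) : ℝ) * α) : ℂ)) 0 N 1]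
  rfl

lemma norm_expSum_initialTerms_le_mul_starDisc (N : ℕ) {p : ℕ} (hp : p ≠ 0) (α : ℝ) :
    ‖expSum (initialTerms a N) (p * α)‖ ≤
      2 * Real.pi * p * (N * starDisc N fun n => Int.fract (a n * α)) := by
  have h := norm_sum_fourierChar_le_mul_starDisc (N := N) hp (x := fun n => Int.fract (a n * α))
    fun n => ⟨Int.fract_nonneg _, Int.fract_lt_one _⟩
  simp only [fourierChar_natCast_mul_fract] at h
  simpa only [expSum_initialTerms ha, mul_left_comm] using h

lemma measureReal_mul_starDisc_lt_le {N H r k : ℕ} (hN : N ≠ 0) (hr : r ≠ 0) {x l τ : ℝ}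
    (hl : 0 < l) (hk : (N : ℝ) ^ (2 * r) = k * l ^ (2 * r))
    (hg : 0 < volume.real (largeSpectrum (initialTerms a N) x l))
    (hτ : (2 * Real.pi * H * τ / l) ^ (2 * r) ≤
      volume.real (largeSpectrum (initialTerms a N) x l) / 4)
    {P : Finset ℕ} (hP : ∀ p ∈ P, p.Prime ∧ p ≤ H) (hPne : P.Nonempty) :
    volume.real {α ∈ Set.Ioc x (x + 1) | N * starDisc N (fun n => Int.fract (a n * α)) < τ} ≤
      8 * Nat.log 2 (H * (a N * r * k)) /
        (#P * volume.real (largeSpectrum (initialTerms a N) x l)) := by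
  have hAne : (initialTerms a N).Nonempty :=
    Finset.card_pos.1 (by rw [card_initialTerms ha]; exact Nat.pos_of_ne_zero hN)
  refine (measureReal_mono ?_ (volume_sep_Ioc_ne_top x _)).trans
    (measureReal_forall_dilate_expSum_lt_le (fun n => nonneg_and_le_of_mem_initialTerms ha) hAne hl
      (by rwa [card_initialTerms ha]) hg hP hPne)
  rintro α ⟨hα, hlt⟩
  refine ⟨hα, fun p hp => lt_of_lt_of_le ?_ hτ⟩
  have hp0 : 0 < p := (hP p hp).1.pos
  have hD : 0 ≤ N * starDisc N fun n => Int.fract (a n * α) :=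
    mul_nonneg N.cast_nonneg (starDisc_nonneg _ _)
  refine pow_lt_pow_left₀ (div_lt_div_of_pos_right ?_ hl) (by positivity) (by omega)
  calc ‖expSum (initialTerms a N) (p * α)‖
      ≤ 2 * Real.pi * p * (N * starDisc N fun n => Int.fract (a n * α)) :=
        norm_expSum_initialTerms_le_mul_starDisc ha N hp0.ne' α
    _ < 2 * Real.pi * p * τ := by gcongr
    _ ≤ 2 * Real.pi * H * τ := by
        have hpH := (hP p hp).2
        have hτ0 := hD.trans hlt.le
        gcongr

end StarDiscrepancy

section Asymptotics

lemma eventually_const_mul_pow_le_two_pow_rpow (C : ℝ) (d : ℕ) {θ : ℝ} (hθ : 0 < θ) :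
    ∀ᶠ m : ℕ in atTop, C * ((m : ℝ) + 1) ^ d ≤ ((2 : ℝ) ^ m) ^ θ := by
  have hb : 1 < (2 : ℝ) ^ θ := Real.one_lt_rpow one_lt_two hθ
  have ht := ((tendsto_pow_const_div_const_pow_of_one_lt d hb).comp
    (tendsto_add_atTop_nat 1)).const_mul (C * 2 ^ θ)
  rw [mul_zero] at ht
  filter_upwards [ht.eventually_le_const zero_lt_one] with m hm
  rw [← Real.rpow_pow_comm zero_le_two]
  simp only [Function.comp_apply, Nat.cast_add_one, pow_succ _ m] at hm
  have hb0 : 0 < (2 : ℝ) ^ θ := by positivity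
  rw [← mul_div_assoc, div_le_one (by positivity), mul_right_comm] at hm
  exact le_of_mul_le_mul_right hm hb0

lemma IsSzemerediTrotterSet.exists_card_pow_le_measureReal_largeSpectrum {A : Finset ℤ} {K : ℕ}
    (hA : IsSzemerediTrotterSet K A) (hcard : 2 ≤ #A) (x : ℝ) :
    ∃ j ≤ Nat.log 2 #A, (#A : ℝ) ^ 14 ≤ 2 ^ 234 * 2 ^ 57 * K ^ 14 *
      (Nat.log 2 #A + 1 : ℕ) ^ 114 * (2 ^ j * volume.real (largeSpectrum A x (2 ^ j))) ^ 52 := by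
  obtain ⟨j, hj, hle⟩ := exists_card_pow_three_le_addEnergy_mul_measureReal_largeSpectrum x hcard
    (Nat.lt_pow_succ_log_self one_lt_two #A)
  refine ⟨j, Nat.lt_succ_iff.1 hj, ?_⟩
  have hE := hA.addEnergy_pow_le
  set v := 2 ^ j * volume.real (largeSpectrum A x (2 ^ j))
  set L : ℝ := ((Nat.log 2 #A + 1 : ℕ) : ℝ)
  have hcoeff : 0 ≤ 2 ^ 234 * L ^ 78 * v ^ 52 := mul_nonneg
    (mul_nonneg (by norm_num) (pow_nonneg (Nat.cast_nonneg _) 78)) (Even.pow_nonneg (by decide) v)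
  refine le_of_mul_le_mul_left ?_ (pow_pos (Nat.cast_pos.2 (by omega : 0 < #A)) 64 : (0 : ℝ) < _)
  calc (#A : ℝ) ^ 64 * #A ^ 14 = (#A ^ 3) ^ 26 := by rw [← pow_add, ← pow_mul]
    _ ≤ (512 * L ^ 3 * E[A] * v ^ 2) ^ 26 := by gcongr
    _ = (2 ^ 234 * L ^ 78 * v ^ 52) * E[A] ^ 26 := by
        rw [show (512 : ℝ) = 2 ^ 9 by norm_num]
        simp only [mul_pow, ← pow_mul]
        ring
    _ ≤ (2 ^ 234 * L ^ 78 * v ^ 52) * (2 ^ 57 * K ^ 14 * L ^ 36 * #A ^ 64) :=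
        mul_le_mul_of_nonneg_left hE hcoeff
    _ = _ := by ring

lemma eventually_exists_rpow_le_measureReal_largeSpectrum (K : ℕ) {δ : ℝ} (hδ : 0 < δ) :
    ∀ᶠ m : ℕ in atTop, ∀ A : Finset ℤ, IsSzemerediTrotterSet K A → #A = 2 ^ m → ∀ x : ℝ,
      ∃ j ≤ m, ((2 : ℝ) ^ m) ^ ((7 : ℝ) / 26 - δ) ≤
        2 ^ j * volume.real (largeSpectrum A x (2 ^ j)) := by
  filter_upwards [eventually_ge_atTop 1, eventually_const_mul_pow_le_two_pow_rpow
    (2 ^ 234 * 2 ^ 57 * K ^ 14) 114 (θ := 52 * δ) (by positivity)] with m hm hconst A hA hcard x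
  obtain ⟨j, hj, hle⟩ := hA.exists_card_pow_le_measureReal_largeSpectrum
    (hcard ▸ Nat.le_self_pow (by omega) 2) x
  rw [hcard, Nat.log_pow one_lt_two] at hj hle
  refine ⟨j, hj, ?_⟩
  push_cast at hle
  set v := 2 ^ j * volume.real (largeSpectrum A x (2 ^ j))
  set X := (2 : ℝ) ^ m
  have hX : 0 < X := by positivity
  have hv : 0 ≤ v := mul_nonneg (by positivity) measureReal_nonneg
  refine le_of_pow_le_pow_left₀ (n := 52) (by norm_num) hv
    (le_of_mul_le_mul_left ?_ (Real.rpow_pos_of_pos hX (52 * δ)))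
  calc X ^ (52 * δ) * (X ^ ((7 : ℝ) / 26 - δ)) ^ 52 = X ^ 14 := by
        rw [← Real.rpow_mul_natCast hX.le, ← Real.rpow_add hX, ← Real.rpow_natCast X 14]
        congr 1
        push_cast
        ring
    _ ≤ 2 ^ 234 * 2 ^ 57 * K ^ 14 * ((m : ℝ) + 1) ^ 114 * v ^ 52 := hle
    _ ≤ X ^ (52 * δ) * v ^ 52 := mul_le_mul_of_nonneg_right hconst (pow_nonneg hv 52)

lemma div_three_mul_log_le_card_primesLE {H : ℕ} (hH : 8 ≤ H) :
    (H : ℝ) / (3 * Real.log H) ≤ #(Nat.primesLE H) := by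
  have hH' : (8 : ℝ) ≤ H := mod_cast hH
  have hlog : Real.log ((H + 1) / 16) ≤ (H + 1) / 16 - 1 :=
    Real.log_le_sub_one_of_pos (by positivity)
  rw [Real.log_div (by positivity) (by norm_num), show (16 : ℝ) = 2 ^ 4 by norm_num,
    Real.log_pow] at hlog
  have hnum : (H : ℝ) / 3 ≤ H * Real.log 2 - Real.log (H + 1) := by
    have h1 := Real.log_two_lt_d9
    have h2 := Real.log_two_gt_d9
    push_cast at hlog
    nlinarith
  rw [Nat.primesLE_card_eq_primeCounting, ← div_div]
  refine le_trans ?_ (Chebyshev.pi_ge H)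
  gcongr

lemma exists_natCast_mul_mem_Icc {X Y g : ℝ} (hX : 0 < X) (hg : X⁻¹ ≤ g) (hg1 : g ≤ 1)
    (hY : 8 ≤ Y) (hYX : 2 * Y ≤ X) :
    ∃ H : ℕ, 8 ≤ H ∧ (H : ℝ) ≤ X ^ 2 ∧ H * g ∈ Set.Icc Y (2 * Y) := by
  have hg0 : 0 < g := (inv_pos.2 hX).trans_le hg
  have hge : Y ≤ ⌈Y / g⌉₊ * g := (div_le_iff₀ hg0).1 (Nat.le_ceil _)
  have hle : ⌈Y / g⌉₊ * g ≤ 2 * Y := by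
    have h := (Nat.ceil_lt_add_one (div_nonneg (by linarith) hg0.le : 0 ≤ Y / g)).le
    calc ⌈Y / g⌉₊ * g ≤ (Y / g + 1) * g := by gcongr
      _ = Y + g := by rw [add_mul, div_mul_cancel₀ _ hg0.ne', one_mul]
      _ ≤ 2 * Y := by linarith
  refine ⟨⌈Y / g⌉₊, ?_, ?_, hge, hle⟩
  · exact_mod_cast (hY.trans hge).trans (mul_le_of_le_one_right (Nat.cast_nonneg _) hg1)
  · have hX1 : (1 : ℝ) ≤ X * g := (inv_le_iff_one_le_mul₀' hX).1 hg
    calc (⌈Y / g⌉₊ : ℝ) ≤ ⌈Y / g⌉₊ * (X * g) := le_mul_of_one_le_right (Nat.cast_nonneg _) hX1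
      _ = X * (⌈Y / g⌉₊ * g) := by ring
      _ ≤ X * X := by gcongr; exact hle.trans hYX
      _ = X ^ 2 := (sq X).symm

lemma two_pi_mul_rpow_div_pow_le {X δ κ g l H : ℝ} {r : ℕ} (hX : 4 ≤ X) (hr : 1 ≤ δ * r)
    (hg : X⁻¹ ≤ g) (hpi : 4 * Real.pi ≤ X ^ δ) (hl : 0 < l) (hlg : X ^ (κ - δ) ≤ l * g)
    (hH : 0 ≤ H) (hHg : H * g ≤ 2 * X ^ (3 * δ)) :
    (2 * Real.pi * H * X ^ (κ - 6 * δ) / l) ^ (2 * r) ≤ g / 4 := by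
  have hX0 : 0 < X := by linarith
  have hg0 : 0 < g := (inv_pos.2 hX0).trans_le hg
  have hbase : 2 * Real.pi * H * X ^ (κ - 6 * δ) / l ≤ X ^ (-δ) := by
    rw [div_le_iff₀ hl]
    refine le_of_mul_le_mul_right ?_ hg0
    calc 2 * Real.pi * H * X ^ (κ - 6 * δ) * g
        = 2 * Real.pi * (H * g) * X ^ (κ - 6 * δ) := by ring
      _ ≤ 2 * Real.pi * (2 * X ^ (3 * δ)) * X ^ (κ - 6 * δ) := by gcongr
      _ = 4 * Real.pi * X ^ (3 * δ) * X ^ (κ - 6 * δ) := by ring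
      _ ≤ X ^ δ * X ^ (3 * δ) * X ^ (κ - 6 * δ) := by gcongr
      _ = X ^ (-δ) * X ^ (κ - δ) := by simp only [← Real.rpow_add hX0]; ring_nf
      _ ≤ X ^ (-δ) * (l * g) := by gcongr
      _ = X ^ (-δ) * l * g := by ring
  calc (2 * Real.pi * H * X ^ (κ - 6 * δ) / l) ^ (2 * r)
      ≤ (X ^ (-δ)) ^ (2 * r) := by gcongr
    _ ≤ X ^ (-2 : ℝ) := by
        rw [← Real.rpow_mul_natCast hX0.le]
        refine Real.rpow_le_rpow_of_exponent_le (by linarith) ?_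
        push_cast
        linarith
    _ = X⁻¹ * X⁻¹ := by rw [Real.rpow_neg hX0.le, Real.rpow_ofNat, sq, mul_inv]
    _ ≤ g * 4⁻¹ := by gcongr
    _ = g / 4 := rfl

lemma natLog_two_le_two_mul_log (n : ℕ) : (Nat.log 2 n : ℝ) ≤ 2 * Real.log n := by
  refine (Real.natLog_le_logb n 2).trans ?_
  have hlog : 0 ≤ Real.log n := Real.log_natCast_nonneg n
  have hlog2 := Real.log_two_gt_d9
  rw [Nat.cast_ofNat, Real.logb, div_le_iff₀ (by linarith)]
  nlinarith

lemma log_natCast_mul_le (m n : ℕ) : Real.log ((m * n : ℕ) : ℝ) ≤ Real.log m + Real.log n := by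
  rcases eq_or_ne m 0 with rfl | hm
  · simp [Real.log_natCast_nonneg]
  rcases eq_or_ne n 0 with rfl | hn
  · simp [Real.log_natCast_nonneg]
  rw [Nat.cast_mul, Real.log_mul (Nat.cast_ne_zero.2 hm) (Nat.cast_ne_zero.2 hn)]

lemma log_two_pow_le (m : ℕ) : Real.log ((2 : ℝ) ^ m) ≤ m + 1 := by
  rw [Real.log_pow]
  exact (mul_le_of_le_one_right m.cast_nonneg (by linarith [Real.log_two_lt_d9])).trans (by simp)

lemma log_le_two_mul_add_one {m H : ℕ} (hH0 : H ≠ 0) (hH : (H : ℝ) ≤ (2 ^ m) ^ 2) :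
    Real.log H ≤ 2 * ((m : ℝ) + 1) := by
  refine (Real.log_le_log (Nat.cast_pos.2 (Nat.pos_of_ne_zero hH0)) hH).trans ?_
  rw [Real.log_pow, Nat.cast_ofNat]
  exact mul_le_mul_of_nonneg_left (log_two_pow_le m) zero_le_two

lemma natLog_mul_le {m j H Q r : ℕ} {B : ℝ} (hH0 : H ≠ 0) (hH : (H : ℝ) ≤ (2 ^ m) ^ 2)
    (hQ : Real.log Q ≤ B * ((m : ℝ) + 1) ^ 2) (hj : j ≤ m) :
    (Nat.log 2 (H * (Q * r * (2 ^ j) ^ (2 * r))) : ℝ) ≤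
      2 * (2 + B + 3 * r) * ((m : ℝ) + 1) ^ 2 := by
  set M : ℝ := (m : ℝ) + 1
  have hM : 1 ≤ M := by simp [M]
  have hMM : M ≤ M ^ 2 := le_self_pow₀ hM two_ne_zero
  have hlogH : Real.log H ≤ 2 * M := log_le_two_mul_add_one hH0 hH
  have hlogr : Real.log r ≤ r * M ^ 2 :=
    (Real.log_le_self r.cast_nonneg).trans (le_mul_of_one_le_right r.cast_nonneg (by linarith))
  have hlogk : Real.log (((2 ^ j) ^ (2 * r) : ℕ) : ℝ) ≤ 2 * r * M ^ 2 := by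
    have hjm : (j : ℝ) + 1 ≤ M := by simpa [M] using hj
    rw [Nat.cast_pow, Real.log_pow, Nat.cast_mul, Nat.cast_pow, Nat.cast_ofNat]
    exact mul_le_mul_of_nonneg_left ((log_two_pow_le j).trans (hjm.trans hMM)) (by positivity)
  have h := natLog_two_le_two_mul_log (H * (Q * r * (2 ^ j) ^ (2 * r)))
  have hHQrk := log_natCast_mul_le H (Q * r * (2 ^ j) ^ (2 * r))
  have hQrk := log_natCast_mul_le (Q * r) ((2 ^ j) ^ (2 * r))
  have hQr := log_natCast_mul_le Q r
  linear_combination h + 2 * (hHQrk + hQrk + hQr + hlogH + hQ + hlogr + hlogk) + 4 * hMM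

lemma rpow_bounds_of_four_mul_pi_le {X δ : ℝ} (hX : 1 ≤ X) (hδ : 0 < δ) (hδ' : 4 * δ ≤ 1)
    (hpi : 4 * Real.pi ≤ X ^ δ) : 4 ≤ X ∧ 8 ≤ X ^ (3 * δ) ∧ 2 * X ^ (3 * δ) ≤ X := by
  have hX0 : 0 < X := by linarith
  have h12 : 12 ≤ X ^ δ := by linarith [Real.pi_gt_three]
  have hself : X ^ δ ≤ X := Real.rpow_le_self_of_one_le hX (by linarith)
  have hthree : X ^ δ ≤ X ^ (3 * δ) := Real.rpow_le_rpow_of_exponent_le hX (by linarith)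
  refine ⟨by linarith, by linarith, ?_⟩
  calc 2 * X ^ (3 * δ) ≤ X ^ δ * X ^ (3 * δ) := by gcongr; linarith
    _ = X ^ (4 * δ) := by rw [← Real.rpow_add hX0]; ring_nf
    _ ≤ X := Real.rpow_le_self_of_one_le hX hδ'

lemma exists_le_card_primesLE_mul {m : ℕ} {Y g : ℝ} (hg : ((2 : ℝ) ^ m)⁻¹ ≤ g) (hg1 : g ≤ 1)
    (hY : 8 ≤ Y) (hYX : 2 * Y ≤ 2 ^ m) :
    ∃ H : ℕ, H ≠ 0 ∧ (H : ℝ) ≤ (2 ^ m) ^ 2 ∧ H * g ≤ 2 * Y ∧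
      Y / (6 * ((m : ℝ) + 1)) ≤ #(Nat.primesLE H) * g := by
  have hX0 : (0 : ℝ) < 2 ^ m := by positivity
  have hg0 : 0 < g := (inv_pos.2 hX0).trans_le hg
  obtain ⟨H, hH8, hHX, hYH, hHY⟩ := exists_natCast_mul_mem_Icc hX0 hg hg1 hY hYX
  have hH0 : H ≠ 0 := by omega
  have hlog0 : 0 < Real.log H := Real.log_pos (Nat.one_lt_cast.2 (by omega))
  refine ⟨H, hH0, hHX, hHY, ?_⟩
  calc Y / (6 * ((m : ℝ) + 1)) = Y / (3 * (2 * ((m : ℝ) + 1))) := by ring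
    _ ≤ H * g / (3 * Real.log H) := by
        gcongr
        exact log_le_two_mul_add_one hH0 hHX
    _ = H / (3 * Real.log H) * g := by ring
    _ ≤ #(Nat.primesLE H) * g := by
        gcongr
        exact div_three_mul_log_le_card_primesLE hH8

lemma isBigO_log_sq_of_eventually_le_mul_exp {a : ℕ → ℕ} {γ C : ℝ}
    (h : ∀ᶠ n : ℕ in atTop, (a n : ℝ) ≤ C * Real.exp (γ * Real.log n ^ 2)) :
    (fun n => Real.log (a n)) =O[atTop] fun n : ℕ => Real.log n ^ 2 := by
  refine Asymptotics.IsBigO.of_bound (|Real.log C| + |γ|) ?_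
  have hlog : ∀ᶠ n : ℕ in atTop, 1 ≤ Real.log n :=
    (Real.tendsto_log_atTop.comp tendsto_natCast_atTop_atTop).eventually_ge_atTop 1
  filter_upwards [h, hlog] with n hn hlogn
  have hsq : 1 ≤ Real.log n ^ 2 := one_le_pow₀ hlogn
  rw [Real.norm_of_nonneg (Real.log_natCast_nonneg _), Real.norm_of_nonneg (by positivity)]
  rcases (a n).eq_zero_or_pos with han | han
  · rw [han, Nat.cast_zero, Real.log_zero]
    positivity
  have hC : 0 < C := pos_of_mul_pos_left ((Nat.cast_pos.2 han).trans_le hn) (Real.exp_pos _).le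
  calc Real.log (a n) ≤ Real.log C + γ * Real.log n ^ 2 := by
        rw [← Real.log_exp (γ * Real.log n ^ 2), ← Real.log_mul hC.ne' (Real.exp_ne_zero _)]
        exact Real.log_le_log (Nat.cast_pos.2 han) hn
    _ ≤ |Real.log C| * Real.log n ^ 2 + |γ| * Real.log n ^ 2 := by
        gcongr
        · exact (le_abs_self _).trans (le_mul_of_one_le_right (abs_nonneg _) hsq)
        · exact le_abs_self γ
    _ = (|Real.log C| + |γ|) * Real.log n ^ 2 := (add_mul ..).symm

lemma exists_nonneg_eventually_log_two_pow_le {a : ℕ → ℕ}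
    (h : (fun n => Real.log (a n)) =O[atTop] fun n : ℕ => Real.log n ^ 2) :
    ∃ B, 0 ≤ B ∧ ∀ᶠ m : ℕ in atTop, Real.log (a (2 ^ m)) ≤ B * ((m : ℝ) + 1) ^ 2 := by
  obtain ⟨B, hB, hle⟩ := h.exists_nonneg
  refine ⟨B, hB, ?_⟩
  filter_upwards [(tendsto_pow_atTop_atTop_of_one_lt one_lt_two).eventually hle.bound] with m hm
  refine (le_abs_self _).trans (hm.trans ?_)
  rw [Real.norm_of_nonneg (sq_nonneg _), Nat.cast_pow, Nat.cast_ofNat]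
  have hlog : 0 ≤ Real.log ((2 : ℝ) ^ m) := Real.log_nonneg (one_le_pow₀ one_le_two)
  gcongr
  exact log_two_pow_le m

lemma ae_eventually_notMem_of_measureReal_le {α : Type*} [MeasurableSpace α] {μ : Measure α}
    {s : ℕ → Set α} (hs : ∀ m, μ (s m) ≠ ⊤) {f : ℕ → ℝ} (hf : Summable f)
    (h : ∀ᶠ m in atTop, μ.real (s m) ≤ f m) : ∀ᵐ x ∂μ, ∀ᶠ m in atTop, x ∉ s m := by
  obtain ⟨M, hM⟩ := eventually_atTop.1 h
  have hle (m : ℕ) : μ (⋃ _ : M ≤ m, s m) ≤ ENNReal.ofReal (f m) := by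
    by_cases hm : M ≤ m
    · simp only [hm, Set.iUnion_true]
      rw [← ENNReal.ofReal_toReal (hs m)]
      exact ENNReal.ofReal_le_ofReal (hM m hm)
    · simp [hm]
  have hsum : ∑' m, μ (⋃ _ : M ≤ m, s m) ≠ ⊤ :=
    ne_top_of_le_ne_top hf.tsum_ofReal_ne_top (ENNReal.tsum_le_tsum hle)
  filter_upwards [ae_eventually_notMem hsum] with x hx
  filter_upwards [hx, eventually_ge_atTop M] with m hm hMm
  simpa [hMm] using hm

end Asymptotics

section MetricDiscrepancy

variable {a : ℕ → ℕ} (ha : StrictMono fun i => (a (i + 1) : ℤ))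

include ha

lemma measureReal_mul_starDisc_lt_two_pow_rpow_le {m j r : ℕ} {δ κ B x : ℝ}
    (hj : j ≤ m) (hδ : 0 < δ) (hδ' : 4 * δ ≤ 1) (hδκ : δ ≤ κ) (hr : 1 ≤ δ * r)
    (hpi : 4 * Real.pi ≤ ((2 : ℝ) ^ m) ^ δ)
    (hlevel : ((2 : ℝ) ^ m) ^ (κ - δ) ≤
      2 ^ j * volume.real (largeSpectrum (initialTerms a (2 ^ m)) x (2 ^ j)))
    (hB : Real.log (a (2 ^ m)) ≤ B * ((m : ℝ) + 1) ^ 2) :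
    volume.real {α ∈ Set.Ioc x (x + 1) |
      (2 : ℝ) ^ m * starDisc (2 ^ m) (fun n => Int.fract (a n * α)) <
        ((2 : ℝ) ^ m) ^ (κ - 6 * δ)} ≤
      96 * (2 + B + 3 * r) * ((m : ℝ) + 1) ^ 3 / ((2 : ℝ) ^ m) ^ (3 * δ) := by
  set g := volume.real (largeSpectrum (initialTerms a (2 ^ m)) x (2 ^ j))
  set M : ℝ := (m : ℝ) + 1
  set X : ℝ := 2 ^ m
  have hX1 : 1 ≤ X := one_le_pow₀ one_le_two
  obtain ⟨hX4, hYge, hYle⟩ := rpow_bounds_of_four_mul_pi_le hX1 hδ hδ' hpi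
  have hX0 : 0 < X := by linarith
  have hg : X⁻¹ ≤ g := by
    rw [inv_le_iff_one_le_mul₀' hX0]
    calc 1 ≤ X ^ (κ - δ) := Real.one_le_rpow (by linarith) (by linarith)
      _ ≤ 2 ^ j * g := hlevel
      _ ≤ X * g := mul_le_mul_of_nonneg_right (pow_le_pow_right₀ one_le_two hj) measureReal_nonneg
  have hg0 : 0 < g := (inv_pos.2 hX0).trans_le hg
  obtain ⟨H, hH0, hHX, hHY, hP⟩ :=
    exists_le_card_primesLE_mul hg (measureReal_largeSpectrum_le_one _ x _) hYge hYle
  have hP0 : 0 < #(Nat.primesLE H) * g := lt_of_lt_of_le (by positivity) hP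
  have hτ : (2 * Real.pi * H * X ^ (κ - 6 * δ) / 2 ^ j) ^ (2 * r) ≤ g / 4 :=
    two_pi_mul_rpow_div_pow_le hX4 hr hg hpi (by positivity) hlevel H.cast_nonneg hHY
  have hk : ((2 ^ m : ℕ) : ℝ) ^ (2 * r) = ((2 ^ (m - j)) ^ (2 * r) : ℕ) * (2 ^ j) ^ (2 * r) := by
    push_cast
    rw [← mul_pow, ← pow_add, Nat.sub_add_cancel hj]
  have hmain := measureReal_mul_starDisc_lt_le ha (by positivity) (by rintro rfl; norm_num at hr)
    (by positivity) hk hg0 hτ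
    (fun p hp => ⟨Nat.prime_of_mem_primesLE hp, Nat.le_of_mem_primesLE hp⟩)
    (Finset.card_pos.1 (Nat.cast_pos.1 (pos_of_mul_pos_left hP0 hg0.le)))
  rw [Nat.cast_pow, Nat.cast_ofNat] at hmain
  have hlog := natLog_mul_le (r := r) hH0 hHX hB (Nat.sub_le m j)
  calc _ ≤ 8 * (Nat.log 2 (H * (a (2 ^ m) * r * (2 ^ (m - j)) ^ (2 * r))) : ℝ) /
        (#(Nat.primesLE H) * g) := hmain
    _ ≤ 8 * (2 * (2 + B + 3 * r) * M ^ 2) / (X ^ (3 * δ) / (6 * M)) := by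
        refine div_le_div₀ ?_ ?_ (by positivity) hP
        · exact mul_nonneg (by norm_num) ((Nat.cast_nonneg _).trans hlog)
        · exact mul_le_mul_of_nonneg_left (by simpa using hlog) (by norm_num)
    _ = 96 * (2 + B + 3 * r) * M ^ 3 / X ^ (3 * δ) := by
        rw [div_div_eq_mul_div]
        ring

variable {K : ℕ} (hST : ∀ N, IsSzemerediTrotterSet K (initialTerms a N))
  (hlog : (fun n => Real.log (a n)) =O[atTop] fun n : ℕ => Real.log n ^ 2)

include hST hlog

lemma eventually_measureReal_mul_starDisc_lt_le {δ : ℝ} (hδ : 0 < δ) (hδ' : 4 * δ ≤ 1) (x : ℝ) :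
    ∀ᶠ m : ℕ in atTop, volume.real {α ∈ Set.Ioc x (x + 1) |
      (2 : ℝ) ^ m * starDisc (2 ^ m) (fun n => Int.fract (a n * α)) <
        ((2 : ℝ) ^ m) ^ ((7 : ℝ) / 26 - 6 * δ)} ≤ ((2 : ℝ) ^ m) ^ (-δ) := by
  obtain ⟨B, _, hBlog⟩ := exists_nonneg_eventually_log_two_pow_le hlog
  set r := ⌈1 / δ⌉₊
  have hr : 1 ≤ δ * r := (div_le_iff₀' hδ).1 (Nat.le_ceil _)
  filter_upwards [hBlog, eventually_exists_rpow_le_measureReal_largeSpectrum K hδ,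
    eventually_const_mul_pow_le_two_pow_rpow (4 * Real.pi) 0 hδ,
    eventually_const_mul_pow_le_two_pow_rpow (96 * (2 + B + 3 * r)) 3 (θ := 2 * δ) (by positivity)]
    with m hBm hlevel hpi hconst
  obtain ⟨j, hj, hjle⟩ := hlevel _ (hST (2 ^ m)) (card_initialTerms ha _) x
  rw [pow_zero, mul_one] at hpi
  have hX : (0 : ℝ) < 2 ^ m := by positivity
  calc _ ≤ 96 * (2 + B + 3 * r) * ((m : ℝ) + 1) ^ 3 / ((2 : ℝ) ^ m) ^ (3 * δ) :=
        measureReal_mul_starDisc_lt_two_pow_rpow_le ha hj hδ hδ' (by linarith) hr hpi hjle hBm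
    _ ≤ ((2 : ℝ) ^ m) ^ (2 * δ) / ((2 : ℝ) ^ m) ^ (3 * δ) := by gcongr
    _ = ((2 : ℝ) ^ m) ^ (-δ) := by rw [← Real.rpow_sub hX]; ring_nf

lemma ae_eventually_two_pow_rpow_le_mul_starDisc {ε : ℝ} (hε : 0 < ε) (hε' : ε ≤ 1) :
    ∀ᵐ α : ℝ, ∀ᶠ m : ℕ in atTop, ((2 : ℝ) ^ m) ^ ((7 : ℝ) / 26 - ε) ≤
      2 ^ m * starDisc (2 ^ m) fun n => Int.fract (a n * α) := by
  obtain ⟨δ, hδ, hδε⟩ : ∃ δ, 0 < δ ∧ 6 * δ = ε := ⟨ε / 6, by positivity, by ring⟩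
  have hbad (z : ℤ) : ∀ᵐ α : ℝ, ∀ᶠ m : ℕ in atTop, α ∉ {α ∈ Set.Ioc (z : ℝ) (z + 1) |
      (2 : ℝ) ^ m * starDisc (2 ^ m) (fun n => Int.fract (a n * α)) <
        ((2 : ℝ) ^ m) ^ ((7 : ℝ) / 26 - ε)} := by
    refine ae_eventually_notMem_of_measureReal_le (fun m => volume_sep_Ioc_ne_top z _)
      (summable_geometric_of_lt_one (by positivity)
        (Real.rpow_lt_one_of_one_lt_of_neg one_lt_two (neg_neg_of_pos hδ)))
      ?_
    simpa only [hδε, Real.rpow_pow_comm zero_le_two] using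
      eventually_measureReal_mul_starDisc_lt_le ha hST hlog hδ (by linarith) z
  filter_upwards [ae_all_iff.2 hbad] with α hα
  filter_upwards [hα (⌈α⌉ - 1)] with m hm
  refine not_lt.1 fun hlt => hm ⟨⟨?_, ?_⟩, hlt⟩
  · push_cast
    linarith [Int.ceil_lt_add_one α]
  · push_cast
    linarith [Int.le_ceil α]

end MetricDiscrepancy

theorem stmt2 (a : ℕ → ℕ)
    (ha_incr : ∀ n : ℕ, 1 ≤ n → a n < a (n + 1))
    (ha_pos : ∀ n : ℕ, 1 ≤ n → 0 < a n)
    (γ C : ℝ) (hγ : 0 < γ) (hC : 0 < C)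
    (hgrowth : ∀ n : ℕ, 1 ≤ n → (a n : ℝ) ≤ C * Real.exp (γ * (Real.log n) ^ 2))
    (hconvex : ∀ n : ℕ, 2 ≤ n → (a n : ℤ) - a (n - 1) < (a (n + 1) : ℤ) - a n) :
    ∀ᵐ α ∂(volume : Measure ℝ), ∀ ε > 0, ∃ᶠ N : ℕ in atTop,
      (N : ℝ) * starDisc N (fun n => Int.fract ((a n : ℝ) * α)) ≥
        (N : ℝ) ^ ((7 : ℝ) / 26 - ε) := by
  have hmono : StrictMono fun i => (a (i + 1) : ℤ) :=
    strictMono_nat_of_lt_succ fun i => Nat.cast_lt.2 (ha_incr (i + 1) (by omega))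
  have hST (N : ℕ) : IsSzemerediTrotterSet 75 (initialTerms a N) :=
    isSzemerediTrotterSet_of_convex hmono
      (strictMono_nat_of_lt_succ fun i => hconvex (i + 2) (by omega)) N
  have hlog := isBigO_log_sq_of_eventually_le_mul_exp ((eventually_ge_atTop 1).mono hgrowth)
  have hrat (k : ℕ) := ae_eventually_two_pow_rpow_le_mul_starDisc hmono hST hlog
    (Nat.one_div_pos_of_nat (n := k)) (div_le_one_of_le₀ (by simp) (by positivity))
  filter_upwards [ae_all_iff.2 hrat] with α hα ε hε
  obtain ⟨k, hk⟩ := exists_nat_one_div_lt hε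
  refine (tendsto_pow_atTop_atTop_of_one_lt one_lt_two).frequently (Eventually.frequently ?_)
  filter_upwards [hα k] with m hm
  rw [Nat.cast_pow, Nat.cast_ofNat]
  refine le_trans (Real.rpow_le_rpow_of_exponent_le (one_le_pow₀ one_le_two) ?_) hm
  linarith
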